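/- arXiv:0801.2856 — 3 statements merged into one kernel-verified Lean document; each statement's English description precedes it below -/
import Mathlib

section
/- If Γ is a completed primitive simple graph, then Γ has vertex-connectivity at least 3; that is, for every set S of at most 2 vertices of Γ, the subgraph of Γ induced on the complement of S is connected. -/
/-!
Suppose `G - S` is disconnected, where `S` has at most two vertices. Then the complement of `S`
splits into nonempty sets `A` and `B` with no edge between them. A vertex of `A` has at least
`4 - 2 = 2` neighbours inside `A`, so `A` has at least two vertices, and so does `B`; by
primitivity the cuts around `A` and `B` have at least 5 edges each (`five_le_side`). All these
edges end in `S`, and the edges meeting `S` number at most `4 * 2 = 8 < 10`.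
-/

open scoped Classical

/-- The set of edges of `G` with one endpoint in `A` and the other outside `A`. -/
noncomputable def cutEdges {V : Type*} [Fintype V] (G : SimpleGraph V) (A : Finset V) :
    Finset (Sym2 V) :=
  G.edgeFinset.filter (fun e => ∃ x, x ∈ e ∧ x ∈ A ∧ ∃ y, y ∈ e ∧ y ∉ A)

/-- A finite simple graph is *completed primitive* if it is 4-regular, connected, has at
least 3 vertices, and every edge cut separating two parts with at least two vertices each
has size strictly greater than 4. -/
def CompletedPrimitive {V : Type*} [Fintype V] (G : SimpleGraph V) : Prop :=
  (∀ v : V, G.degree v = 4) ∧ G.Connected ∧ 3 ≤ Fintype.card V ∧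
    ∀ A : Finset V, 2 ≤ A.card → 2 ≤ Aᶜ.card → 4 < (cutEdges G A).card

/-- If every edge leaving `A` ends in `S`, the cut around `A` is counted from the `S`-side. -/
lemma cutEdges_card_le {V : Type*} [Fintype V] (G : SimpleGraph V) (A S : Finset V)
    (hA : ∀ a ∈ A, ∀ b, G.Adj a b → b ∈ A ∨ b ∈ S) :
    (cutEdges G A).card ≤ ∑ s ∈ S, (G.neighborFinset s ∩ A).card := by
  have hsub : cutEdges G A ⊆
      S.biUnion (fun s => (G.neighborFinset s ∩ A).image (fun a => s(s, a))) := by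
    intro e he
    simp only [cutEdges, Finset.mem_filter, SimpleGraph.mem_edgeFinset] at he
    obtain ⟨heG, x, hxe, hxA, y, hye, hyA⟩ := he
    have hxy : x ≠ y := fun hh => hyA (hh ▸ hxA)
    have he' : e = s(x, y) := (Sym2.mem_and_mem_iff hxy).1 ⟨hxe, hye⟩
    subst he'
    have hadj : G.Adj x y := heG
    have hyS : y ∈ S := (hA x hxA y hadj).resolve_left hyA
    simp only [Finset.mem_biUnion, Finset.mem_image, Finset.mem_inter,
      SimpleGraph.mem_neighborFinset]
    exact ⟨y, hyS, x, ⟨hadj.symm, hxA⟩, Sym2.eq_swap⟩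
  exact (Finset.card_le_card hsub).trans
    (Finset.card_biUnion_le.trans (Finset.sum_le_sum fun s _ => Finset.card_image_le))

lemma two_le_card_side {V : Type*} [Fintype V] (G : SimpleGraph V)
    (hdeg : ∀ v : V, G.degree v = 4) (A S : Finset V) (hS : S.card ≤ 2) (hne : A.Nonempty)
    (hA : ∀ a ∈ A, ∀ b, G.Adj a b → b ∈ A ∨ b ∈ S) : 2 ≤ A.card := by
  obtain ⟨a, ha⟩ := hne
  have hsub : G.neighborFinset a ⊆ A.erase a ∪ S := by
    intro b hb
    rw [SimpleGraph.mem_neighborFinset] at hb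
    rcases hA a ha b hb with hbA | hbS
    · exact Finset.mem_union_left _ (Finset.mem_erase.2 ⟨hb.ne', hbA⟩)
    · exact Finset.mem_union_right _ hbS
  have h1 := Finset.card_le_card hsub
  rw [SimpleGraph.card_neighborFinset_eq_degree, hdeg] at h1
  have h2 := Finset.card_union_le (A.erase a) S
  have h3 := Finset.card_erase_of_mem ha
  omega

/-- Each side of a separation by `S` sends at least five edges to `S`; the other side `B` only
serves to make the complement of `A` large enough. -/
lemma five_le_side {V : Type*} [Fintype V] (G : SimpleGraph V) (h : CompletedPrimitive G)
    (A B S : Finset V) (hS : S.card ≤ 2) (hneA : A.Nonempty) (hneB : B.Nonempty)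
    (hdisj : Disjoint A B)
    (hA : ∀ a ∈ A, ∀ b, G.Adj a b → b ∈ A ∨ b ∈ S)
    (hB : ∀ a ∈ B, ∀ b, G.Adj a b → b ∈ B ∨ b ∈ S) :
    5 ≤ ∑ s ∈ S, (G.neighborFinset s ∩ A).card := by
  obtain ⟨hdeg, -, -, hcut⟩ := h
  have hBc : B ⊆ Aᶜ := fun b hb => Finset.mem_compl.2 (Finset.disjoint_right.1 hdisj hb)
  have h1 := hcut A (two_le_card_side G hdeg A S hS hneA hA)
    ((two_le_card_side G hdeg B S hS hneB hB).trans (Finset.card_le_card hBc))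
  exact Nat.succ_le_of_lt (h1.trans_le (cutEdges_card_le G A S hA))

lemma no_separation {V : Type*} [Fintype V] (G : SimpleGraph V) (h : CompletedPrimitive G)
    (A B S : Finset V) (hS : S.card ≤ 2) (hneA : A.Nonempty) (hneB : B.Nonempty)
    (hdisj : Disjoint A B)
    (hA : ∀ a ∈ A, ∀ b, G.Adj a b → b ∈ A ∨ b ∈ S)
    (hB : ∀ a ∈ B, ∀ b, G.Adj a b → b ∈ B ∨ b ∈ S) : False := by
  have h1 := five_le_side G h A B S hS hneA hneB hdisj hA hB
  have h2 := five_le_side G h B A S hS hneB hneA hdisj.symm hB hA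
  have h3 : ∑ s ∈ S, ((G.neighborFinset s ∩ A).card + (G.neighborFinset s ∩ B).card)
      ≤ ∑ _s ∈ S, 4 := by
    refine Finset.sum_le_sum fun s _ => ?_
    rw [← Finset.card_union_of_disjoint
      (hdisj.mono Finset.inter_subset_right Finset.inter_subset_right), ← h.1 s,
      ← SimpleGraph.card_neighborFinset_eq_degree]
    exact Finset.card_le_card
      (Finset.union_subset Finset.inter_subset_left Finset.inter_subset_left)
  rw [Finset.sum_add_distrib, Finset.sum_const, smul_eq_mul] at h3
  omega

/-- A completed primitive graph has vertex-connectivity at least 3: removing any set of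
at most 2 vertices leaves a connected induced subgraph. -/
theorem completedPrimitive_vertexConnectivity_ge_three {V : Type*} [Fintype V]
    (G : SimpleGraph V) (h : CompletedPrimitive G) :
    ∀ S : Finset V, S.card ≤ 2 → (G.induce ((↑S : Set V)ᶜ)).Connected := by
  intro S hS
  have hne : Nonempty ((↑S : Set V)ᶜ : Set V) := by
    obtain ⟨v, hv⟩ : ∃ v, v ∉ S := by
      by_contra! hall
      have h1 : Finset.univ ⊆ S := fun v _ => hall v
      have h2 := Finset.card_le_card h1
      have h3 := h.2.2.1
      rw [Finset.card_univ] at h2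
      omega
    exact ⟨⟨v, by simpa using hv⟩⟩
  refine SimpleGraph.Connected.mk (fun u v => ?_)
  by_contra huv
  -- `A` is the component of `u` in `G - S`, and `B` is the rest of `G - S`.
  let P : V → Prop := fun w => ∃ hw : w ∈ ((↑S : Set V)ᶜ : Set V),
    (G.induce ((↑S : Set V)ᶜ)).Reachable u ⟨w, hw⟩
  have hstep : ∀ a b, G.Adj a b → b ∉ S → P a → P b := by
    rintro a b hab hbS ⟨haS, hr⟩
    have hbS' : b ∈ ((↑S : Set V)ᶜ : Set V) := by simpa using hbS
    refine ⟨hbS', hr.trans (SimpleGraph.Adj.reachable ?_)⟩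
    simpa using hab
  refine no_separation G h (Finset.univ.filter P) (Finset.univ.filter fun w => w ∉ S ∧ ¬ P w)
    S hS ⟨u, ?_⟩ ⟨v, ?_⟩ ?_ ?_ ?_
  · exact Finset.mem_filter.2 ⟨Finset.mem_univ _, u.2, SimpleGraph.Reachable.refl _⟩
  · refine Finset.mem_filter.2 ⟨Finset.mem_univ _, fun hv => v.2 (Finset.mem_coe.2 hv), ?_⟩
    rintro ⟨_, hr⟩
    exact huv hr
  · rw [Finset.disjoint_left]
    intro w hw hw'
    exact (Finset.mem_filter.1 hw').2.2 (Finset.mem_filter.1 hw).2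
  · intro a ha b hab
    by_cases hbS : b ∈ S
    · exact Or.inr hbS
    · exact Or.inl (Finset.mem_filter.2
        ⟨Finset.mem_univ _, hstep a b hab hbS (Finset.mem_filter.1 ha).2⟩)
  · intro a ha b hab
    by_cases hbS : b ∈ S
    · exact Or.inr hbS
    · have ha' := (Finset.mem_filter.1 ha).2
      exact Or.inl (Finset.mem_filter.2
        ⟨Finset.mem_univ _, hbS, fun hb => ha'.2 (hstep b a hab.symm ha'.1 hb)⟩)
end

section
/- Let Γ be a finite simple 4-regular graph with at least 3 vertices and let v be any vertex of Γ. Then the vertex-deleted subgraph Γ − v is primitive if and only if Γ is completed primitive. -/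
/-!
Write `N` for the number of vertices of `Γ - v`. For a vertex set `A` let `e(A)` be the number of
edges of `Γ[A]` and `∂A` the edge cut of `A`. Since `Γ` is 4-regular, `2 e(A) + |∂A| = 4 |A|`
(`innerDegree_add_cut`), so a cut has more than four edges exactly when `e(A) < 2 |A| - 2`.
For `A = V ∖ {v}` this gives `2 N - 2` edges in `Γ - v`, whence `n = 2 h₁` for `Γ - v`
says that `Γ - v` is connected. For an edge-spanned subgraph `γ`, the inequality
`n(γ) > 2 h₁(γ)` says `n(γ) < 2 N(γ) - 2 c(γ)`.

If `Γ - v` is primitive, a cut may be described by the side `A` avoiding `v`, and the inequality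
for the edges of `Γ[A]` gives `e(A) < 2 |A| - 2` as soon as there are any such edges.
Conversely, suppose that all nontrivial cuts are large. If `Γ - v` were disconnected, the cuts of
the two sides would share the four edges at `v`, but one of them is nontrivial. A component of
a proper edge-spanned subgraph of `Γ - v` has vertex set `A` with `|A| ≥ 2`; it has fewer than
`2 |A| - 2` edges, because `∂A` is large, or, when `A` is everything, because an edge of `Γ - v` is
missing. Summing over the components gives the inequality (`two_mul_edgeSubgraphCycleRank_lt`).

Edges are counted throughout by degree sums (`innerDegree`), which split over vertex sets.
-/


open scoped Classical

/-- The cycle rank `h₁ = n − N + c` of the subgraph of a graph on `V` determined by an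
edge set `Es` together with the endpoints of those edges. -/
noncomputable def edgeSubgraphCycleRank {V : Type*} [Fintype V] (Es : Finset (Sym2 V)) : ℤ :=
  (Es.card : ℤ)
    - ((Finset.univ.filter (fun v : V => ∃ e ∈ Es, v ∈ e)).card : ℤ)
    + (Nat.card ((SimpleGraph.fromEdgeSet (↑Es : Set (Sym2 V))).induce
        {v : V | ∃ e ∈ Es, v ∈ e}).ConnectedComponent : ℤ)

/-- The cycle rank `h₁ = n − N + c` of a finite graph (with vertex set the whole type). -/
noncomputable def cycleRank {V : Type*} [Fintype V] (G : SimpleGraph V) : ℤ :=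
  (G.edgeFinset.card : ℤ) - (Fintype.card V : ℤ) + (Nat.card G.ConnectedComponent : ℤ)

/-- A finite graph `G` is *primitive* if `n(G) = 2·h₁(G)` and every proper subgraph given
by a nonempty proper subset of the edges (with the endpoints of those edges as vertices)
satisfies `n(γ) > 2·h₁(γ)`. -/
noncomputable def IsPrimitive {V : Type*} [Fintype V] (G : SimpleGraph V) : Prop :=
  (G.edgeFinset.card : ℤ) = 2 * cycleRank G ∧
    ∀ Es : Finset (Sym2 V), Es ⊆ G.edgeFinset → Es.Nonempty → Es ≠ G.edgeFinset →
      2 * edgeSubgraphCycleRank Es < (Es.card : ℤ)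

/-- Counting a cut from the side of `A`. -/
lemma card_cutEdges {V : Type*} [Fintype V] (G : SimpleGraph V) (A : Finset V) :
    (cutEdges G A).card = ∑ w ∈ A, (Finset.univ.filter fun u => G.Adj w u ∧ u ∉ A).card := by
  rw [← Finset.card_sigma]
  symm
  refine Finset.card_bij (fun p _ => s(p.1, p.2)) ?_ ?_ ?_
  · rintro ⟨w, u⟩ h
    simp only [Finset.mem_sigma, Finset.mem_filter, Finset.mem_univ, true_and] at h
    simp only [cutEdges, Finset.mem_filter, SimpleGraph.mem_edgeFinset, SimpleGraph.mem_edgeSet]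
    exact ⟨h.2.1, w, by simp, h.1, u, by simp, h.2.2⟩
  · rintro ⟨w, u⟩ h ⟨w', u'⟩ h' e
    simp only [Finset.mem_sigma, Finset.mem_filter, Finset.mem_univ, true_and] at h h'
    simp only [Sym2.eq_iff] at e
    rcases e with ⟨rfl, rfl⟩ | ⟨rfl, rfl⟩
    · rfl
    · exact absurd h.1 h'.2.2
  · intro e he
    simp only [cutEdges, Finset.mem_filter, SimpleGraph.mem_edgeFinset] at he
    obtain ⟨heG, x, hx, hxA, y, hy, hyA⟩ := he
    have hxy : x ≠ y := by rintro rfl; exact hyA hxA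
    have : e = s(x, y) := (Sym2.mem_and_mem_iff hxy).1 ⟨hx, hy⟩
    subst this
    exact ⟨⟨x, y⟩, by simpa [hxA, hyA] using heG, rfl⟩

lemma cutEdges_compl {V : Type*} [Fintype V] (G : SimpleGraph V) (A : Finset V) :
    cutEdges G Aᶜ = cutEdges G A := by
  ext e
  simp only [cutEdges, Finset.mem_filter, Finset.mem_compl, not_not]
  constructor
  · rintro ⟨h, x, hx, hxA, y, hy, hyA⟩
    exact ⟨h, y, hy, hyA, x, hx, hxA⟩
  · rintro ⟨h, x, hx, hxA, y, hy, hyA⟩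
    exact ⟨h, y, hy, hyA, x, hx, hxA⟩

/-- Ordered pairs of adjacent vertices inside `A`, i.e. twice the number of edges of `G[A]`. -/
noncomputable def innerDegree {V : Type*} [Fintype V] (G : SimpleGraph V) (A : Finset V) : ℕ :=
  ∑ w ∈ A, (Finset.univ.filter fun u => G.Adj w u ∧ u ∈ A).card

/-- In a 4-regular graph, `2 e(A) + |∂A| = 4 |A|`. -/
lemma innerDegree_add_cut {V : Type*} [Fintype V] (G : SimpleGraph V)
    (hreg : ∀ v : V, G.degree v = 4) (A : Finset V) :
    innerDegree G A + (cutEdges G A).card = 4 * A.card := by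
  rw [card_cutEdges, innerDegree, ← Finset.sum_add_distrib, mul_comm, ← smul_eq_mul]
  refine Finset.sum_eq_card_nsmul fun w _ => ?_
  rw [← hreg w, ← SimpleGraph.card_neighborFinset_eq_degree, SimpleGraph.neighborFinset_eq_filter,
    ← Finset.card_filter_add_card_filter_not (s := Finset.univ.filter (G.Adj w)) (fun u => u ∈ A),
    Finset.filter_filter, Finset.filter_filter]

lemma innerDegree_map {V W : Type*} [Fintype V] [Fintype W] (G : SimpleGraph V) (f : W ↪ V)
    (A : Finset W) : innerDegree G (A.map f) = innerDegree (G.comap f) A := by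
  rw [innerDegree, Finset.sum_map, innerDegree]
  refine Finset.sum_congr rfl fun w _ => ?_
  rw [← Finset.card_map f]
  congr 1
  ext u
  simp only [Finset.mem_filter, Finset.mem_univ, true_and, Finset.mem_map, SimpleGraph.comap_adj]
  constructor
  · rintro ⟨h, a, ha, rfl⟩
    exact ⟨a, ⟨h, ha⟩, rfl⟩
  · rintro ⟨a, ⟨h, ha⟩, rfl⟩
    exact ⟨h, a, ha, rfl⟩

lemma innerDegree_univ {V : Type*} [Fintype V] (G : SimpleGraph V) [Fintype G.edgeSet] :
    innerDegree G Finset.univ = 2 * G.edgeFinset.card := by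
  have h : ∑ w, G.degree w = 2 * G.edgeFinset.card := by
    convert G.sum_degrees_eq_twice_card_edges
  rw [← h, innerDegree]
  refine Finset.sum_congr rfl fun w _ => ?_
  rw [← SimpleGraph.card_neighborFinset_eq_degree, SimpleGraph.neighborFinset_eq_filter]
  simp

lemma edgeFinset_fromEdgeSet {W : Type*} [Fintype W] (H : SimpleGraph W) [Fintype H.edgeSet]
    {Es : Finset (Sym2 W)} [Fintype (SimpleGraph.fromEdgeSet (Es : Set (Sym2 W))).edgeSet]
    (h : Es ⊆ H.edgeFinset) :
    (SimpleGraph.fromEdgeSet (Es : Set (Sym2 W))).edgeFinset = Es := by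
  ext e
  simp only [SimpleGraph.mem_edgeFinset, SimpleGraph.edgeSet_fromEdgeSet, Set.mem_sdiff,
    Finset.mem_coe, and_iff_left_iff_imp]
  intro he
  exact H.not_isDiag_of_mem_edgeSet (SimpleGraph.mem_edgeFinset.1 (h he))

/-- The edges of `H[A]`, counted through `innerDegree`. -/
lemma innerDegree_eq_two_mul {W : Type*} [Fintype W] (H : SimpleGraph W) (A : Finset W) :
    innerDegree H A = 2 * (H.edgeFinset.filter fun e => ∀ x ∈ e, x ∈ A).card := by
  set Es := H.edgeFinset.filter fun e => ∀ x ∈ e, x ∈ A with hEs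
  have hsub : Es ⊆ H.edgeFinset := Finset.filter_subset _ _
  rw [← edgeFinset_fromEdgeSet H hsub, ← innerDegree_univ, innerDegree, innerDegree]
  have hadj : ∀ w u, (SimpleGraph.fromEdgeSet (Es : Set (Sym2 W))).Adj w u ↔
      H.Adj w u ∧ w ∈ A ∧ u ∈ A := by
    intro w u
    simp only [SimpleGraph.fromEdgeSet_adj, hEs, Finset.coe_filter, Set.mem_ofPred_eq,
      SimpleGraph.mem_edgeFinset, SimpleGraph.mem_edgeSet, Sym2.mem_iff]
    constructor
    · rintro ⟨⟨h, h'⟩, -⟩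
      exact ⟨h, h' _ (Or.inl rfl), h' _ (Or.inr rfl)⟩
    · rintro ⟨h, hw, hu⟩
      exact ⟨⟨h, by rintro x (rfl | rfl) <;> assumption⟩, h.ne⟩
  rw [← Finset.sum_subset (Finset.subset_univ A)]
  · refine Finset.sum_congr rfl fun w hw => ?_
    congr 1
    ext u
    simp only [hadj, hw, Finset.mem_univ, and_true, true_and]
  · intro w _ hw
    simp only [hadj, hw, false_and, and_false, Finset.filter_false, Finset.card_empty]

/-- The degree sum of the subgraph spanned by `Es` splits over its components; if every
possible component obeys `innerDegree A < 4 |A| - 4`, then `n < 2 N - 2 c`. The hypothesis concerns only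
sets with at least two vertices because a component of an edge-spanned subgraph contains an edge. -/
lemma two_mul_edgeSubgraphCycleRank_lt {W : Type*} [Fintype W] (H : SimpleGraph W)
    {Es : Finset (Sym2 W)} (hsub : Es ⊆ H.edgeFinset) (hne : Es.Nonempty)
    (hA : ∀ A : Finset W, 2 ≤ A.card →
      innerDegree (SimpleGraph.fromEdgeSet (Es : Set (Sym2 W))) A + 4 < 4 * A.card) :
    2 * edgeSubgraphCycleRank Es < (Es.card : ℤ) := by
  set K := SimpleGraph.fromEdgeSet (Es : Set (Sym2 W)) with hK
  set S : Set W := {v : W | ∃ e ∈ Es, v ∈ e} with hS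
  have hKadj : ∀ w u, K.Adj w u ↔ s(w, u) ∈ Es := by
    intro w u
    rw [← edgeFinset_fromEdgeSet H hsub, SimpleGraph.mem_edgeFinset, SimpleGraph.mem_edgeSet]
  have hmem : ∀ w u, K.Adj w u → w ∈ S := fun w u h => ⟨_, (hKadj w u).1 h, by simp⟩
  have hex : ∀ w ∈ S, ∃ u, K.Adj w u := by
    rintro w ⟨e, he, hw⟩
    obtain ⟨u, rfl⟩ := Sym2.mem_iff_exists.1 hw
    exact ⟨u, (hKadj w u).2 he⟩
  let comp : S → (K.induce S).ConnectedComponent := (K.induce S).connectedComponentMk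
  let B : (K.induce S).ConnectedComponent → Finset S := fun c => Finset.univ.filter (comp · = c)
  let f : S ↪ W := Function.Embedding.subtype _
  let d : W → ℕ := fun w => (Finset.univ.filter fun u => K.Adj w u).card
  have hsum : ∑ s : S, d s = 2 * Es.card := by
    have h1 : ∑ w : W, d w = 2 * Es.card := by
      have hEK : K.edgeFinset = Es := edgeFinset_fromEdgeSet H hsub
      rw [← hEK, ← innerDegree_univ K, innerDegree]
      simp only [d, Finset.mem_univ, and_true]
    rw [← h1]
    change ∑ s, d (f s) = _
    rw [← Finset.sum_map Finset.univ f d]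
    refine Finset.sum_subset (Finset.subset_univ _) fun w _ hw => ?_
    simp only [d, Finset.card_eq_zero, Finset.filter_eq_empty_iff]
    intro u _ h
    exact hw (Finset.mem_map.2 ⟨⟨w, hmem w u h⟩, Finset.mem_univ _, rfl⟩)
  have hcomp : ∀ s t : S, K.Adj s t → comp s = comp t := fun s t h =>
    SimpleGraph.ConnectedComponent.sound (SimpleGraph.Adj.reachable (by simpa using h))
  have hB : ∀ c, ∑ s ∈ B c, d s + 4 < 4 * (B c).card := by
    intro c
    have h2 : 2 ≤ ((B c).map f).card := by
      obtain ⟨s, rfl⟩ := c.exists_rep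
      obtain ⟨u, hu⟩ := hex s s.2
      have : 1 < ((B (comp s)).map f).card := by
        rw [Finset.one_lt_card]
        refine ⟨s, ?_, u, ?_, hu.ne⟩
        · exact Finset.mem_map.2 ⟨s, by simp [B], rfl⟩
        · refine Finset.mem_map.2 ⟨⟨u, hmem u s hu.symm⟩, ?_, rfl⟩
          simp only [B, Finset.mem_filter, Finset.mem_univ, true_and]
          exact (hcomp _ _ hu).symm
      exact this
    have h3 := hA _ h2
    rw [Finset.card_map, innerDegree, Finset.sum_map] at h3
    refine lt_of_le_of_lt (Nat.add_le_add_right (Finset.sum_le_sum fun s hs => ?_) 4) h3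
    refine Finset.card_le_card fun u hu => ?_
    simp only [Finset.mem_filter, Finset.mem_univ, true_and] at hu ⊢
    refine ⟨hu, Finset.mem_map.2 ⟨⟨u, hmem u s hu.symm⟩, ?_, rfl⟩⟩
    simp only [B, Finset.mem_filter, Finset.mem_univ, true_and] at hs ⊢
    rw [← hs]
    exact (hcomp _ _ hu).symm
  have hcard : ∑ c, (B c).card = Fintype.card S :=
    (Finset.card_eq_sum_card_fiberwise (fun _ _ => Finset.mem_univ _)).symm
  have hsum' : ∑ c, ∑ s ∈ B c, d s = 2 * Es.card := by
    rw [← hsum]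
    exact Finset.sum_fiberwise _ _ _
  have hCne : (Finset.univ : Finset (K.induce S).ConnectedComponent).Nonempty := by
    obtain ⟨e, he⟩ := hne
    induction e using Sym2.ind with
    | _ x y => exact ⟨comp ⟨x, _, he, by simp⟩, Finset.mem_univ _⟩
  have hlt := Finset.sum_lt_sum_of_nonempty hCne fun c _ => hB c
  rw [Finset.sum_add_distrib, hsum', ← Finset.mul_sum, hcard, Finset.sum_const, Finset.card_univ,
    smul_eq_mul] at hlt
  have hN : (Finset.univ.filter fun v : W => ∃ e ∈ Es, v ∈ e).card = Fintype.card S := by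
    exact (Fintype.card_subtype _).symm
  unfold edgeSubgraphCycleRank
  rw [hN, Nat.card_eq_fintype_card]
  change 2 * ((Es.card : ℤ) - Fintype.card S + Fintype.card (K.induce S).ConnectedComponent) < _
  zify at hlt
  linarith

lemma innerDegree_mono {W : Type*} [Fintype W] {K H : SimpleGraph W} (h : K ≤ H) (A : Finset W) :
    innerDegree K A ≤ innerDegree H A :=
  Finset.sum_le_sum fun _ _ => Finset.card_le_card fun _ hu => by
    simp only [Finset.mem_filter, Finset.mem_univ, true_and] at hu ⊢
    exact ⟨h hu.1, hu.2⟩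

/-- A disconnected graph has a vertex set `A`, neither empty nor full, that no edge leaves. -/
lemma exists_closed_of_not_preconnected {W : Type*} [Fintype W] (H : SimpleGraph W)
    (h : ¬ H.Preconnected) : ∃ A : Finset W, A.Nonempty ∧ Aᶜ.Nonempty ∧
      innerDegree H A + innerDegree H Aᶜ = innerDegree H Finset.univ := by
  simp only [SimpleGraph.Preconnected, not_forall] at h
  obtain ⟨x, y, hxy⟩ := h
  refine ⟨Finset.univ.filter (H.Reachable x), ⟨x, by simp⟩, ⟨y, by simpa using hxy⟩, ?_⟩
  simp only [innerDegree]
  rw [← Finset.sum_add_sum_compl (Finset.univ.filter (H.Reachable x))]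
  congr 1
  · refine Finset.sum_congr rfl fun w hw => ?_
    congr 1
    ext u
    simp only [Finset.mem_filter, Finset.mem_univ, true_and, and_true] at hw ⊢
    exact and_iff_left_of_imp fun hu => hw.trans hu.reachable
  · refine Finset.sum_congr rfl fun w hw => ?_
    congr 1
    ext u
    simp only [Finset.mem_compl, Finset.mem_filter, Finset.mem_univ, true_and, and_true] at hw ⊢
    exact and_iff_left_of_imp fun hu hr => hw (hr.trans hu.symm.reachable)

/-- The theorem with `Γ - v` replaced by the pullback of `Γ` along an injection `f : W ↪ V` with
range `V ∖ {v}`. -/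
lemma isPrimitive_comap_iff {V W : Type*} [Fintype V] [Fintype W] (G : SimpleGraph V)
    (hreg : ∀ v : V, G.degree v = 4) (hcard : 3 ≤ Fintype.card V) (v : V) (f : W ↪ V)
    (hf : Finset.univ.map f = {v}ᶜ) :
    IsPrimitive (G.comap f) ↔ CompletedPrimitive G := by
  obtain ⟨H, hH⟩ : ∃ H, H = G.comap f := ⟨_, rfl⟩
  rw [← hH]
  have hbal : ∀ A : Finset W, innerDegree H A + (cutEdges G (A.map f)).card = 4 * A.card := by
    intro A
    rw [hH, ← innerDegree_map, innerDegree_add_cut G hreg, Finset.card_map]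
  have hcutv : (cutEdges G {v}).card = 4 := by
    have := innerDegree_add_cut G hreg {v}
    have h0 : innerDegree G {v} = 0 := by
      simpa [innerDegree, Finset.filter_eq_empty_iff] using fun x (h : G.Adj v x) => h.ne'
    simpa [h0] using this
  have hrange : ∀ u, u ≠ v → ∃ w, f w = u := fun u h => by
    have : u ∈ Finset.univ.map f := by rw [hf]; simpa using h
    simpa using this
  have hV : Fintype.card V = Fintype.card W + 1 := by
    have := congrArg Finset.card hf
    rw [Finset.card_map, Finset.card_compl, Finset.card_univ, Finset.card_singleton] at this
    omega
  have hW : 4 ≤ Fintype.card W := by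
    have := G.degree_lt_card_verts v
    rw [hreg v] at this
    omega
  -- `Γ - v` has `2 N - 2` edges.
  have hE : H.edgeFinset.card + 2 = 2 * Fintype.card W := by
    have := hbal Finset.univ
    rw [hf, cutEdges_compl, hcutv, innerDegree_univ, Finset.card_univ] at this
    omega
  have hWne : Nonempty W := Fintype.card_pos_iff.1 (by omega)
  have hconn : (H.edgeFinset.card : ℤ) = 2 * cycleRank H ↔ H.Preconnected := by
    have h1 : (H.edgeFinset.card : ℤ) = 2 * cycleRank H ↔ Nat.card H.ConnectedComponent = 1 := by
      unfold cycleRank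
      zify at hE ⊢
      constructor <;> intro h <;> linarith
    rw [h1, Nat.card_eq_one_iff_unique]
    refine ⟨fun h x y => ?_, fun h => ⟨h.subsingleton_connectedComponent,
      ⟨H.connectedComponentMk hWne.some⟩⟩⟩
    have := h.1
    exact SimpleGraph.ConnectedComponent.exact (Subsingleton.elim _ _)
  unfold IsPrimitive
  rw [hconn]
  constructor
  · rintro ⟨hpre, hprim⟩
    refine ⟨hreg, ?_, hcard, ?_⟩
    · obtain ⟨u, hu⟩ : ∃ u, G.Adj v u :=
        (G.degree_pos_iff_exists_adj v).1 (by rw [hreg v]; norm_num)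
      have hreach : ∀ x, G.Reachable u x := by
        obtain ⟨u', rfl⟩ := hrange u hu.ne'
        intro x
        by_cases hx : x = v
        · exact hx ▸ hu.symm.reachable
        · obtain ⟨x', rfl⟩ := hrange x hx
          subst hH
          exact (hpre u' x').map ⟨f, fun h => h⟩
      exact SimpleGraph.connected_iff_exists_forall_reachable G |>.2 ⟨u, hreach⟩
    · have key : ∀ A : Finset W, 2 ≤ A.card → A ≠ Finset.univ →
          4 < (cutEdges G (A.map f)).card := by
        intro A hA hAu
        have hb := hbal A
        rw [innerDegree_eq_two_mul] at hb
        set Es := H.edgeFinset.filter fun e => ∀ x ∈ e, x ∈ A with hEs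
        rcases Es.eq_empty_or_nonempty with h0 | hne
        · rw [h0, Finset.card_empty] at hb
          omega
        have hprop : Es ≠ H.edgeFinset := by
          intro heq
          apply hAu
          ext w
          simp only [Finset.mem_univ, iff_true]
          have : Nontrivial W := Fintype.one_lt_card_iff_nontrivial.1 (by omega)
          obtain ⟨u, hu⟩ := hpre.exists_adj_of_nontrivial w
          have : s(w, u) ∈ Es := heq ▸ SimpleGraph.mem_edgeFinset.2 hu
          exact (Finset.mem_filter.1 this).2 w (by simp)
        have hlt := hprim Es (Finset.filter_subset _ _) hne hprop
        unfold edgeSubgraphCycleRank at hlt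
        have hN : (Finset.univ.filter fun w : W => ∃ e ∈ Es, w ∈ e).card ≤ A.card := by
          refine Finset.card_le_card fun w hw => ?_
          obtain ⟨e, he, hw⟩ := (Finset.mem_filter.1 hw).2
          exact (Finset.mem_filter.1 he).2 w hw
        have hc : 0 < Nat.card ((SimpleGraph.fromEdgeSet (↑Es : Set (Sym2 W))).induce
            {w : W | ∃ e ∈ Es, w ∈ e}).ConnectedComponent := by
          rw [Nat.card_pos_iff]
          refine ⟨?_, inferInstance⟩
          obtain ⟨e, he⟩ := hne
          induction e using Sym2.ind with
          | _ x y => exact ⟨SimpleGraph.connectedComponentMk _ ⟨x, _, he, by simp⟩⟩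
        omega
      have key' : ∀ A : Finset V, v ∉ A → 2 ≤ A.card → 2 ≤ Aᶜ.card →
          4 < (cutEdges G A).card := by
        intro A hvA hA hAc
        have hmap : (Finset.univ.filter fun w => f w ∈ A).map f = A := by
          ext u
          simp only [Finset.mem_map, Finset.mem_filter, Finset.mem_univ, true_and]
          constructor
          · rintro ⟨w, hw, rfl⟩
            exact hw
          · intro hu
            obtain ⟨w, rfl⟩ := hrange u (by rintro rfl; exact hvA hu)
            exact ⟨w, hu, rfl⟩
        rw [← hmap]
        apply key
        · rwa [← Finset.card_map f, hmap]
        · intro hu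
          rw [hu, hf] at hmap
          rw [← hmap, compl_compl, Finset.card_singleton] at hAc
          omega
      intro A hA hAc
      -- A cut has a side avoiding `v`.
      by_cases hvA : v ∈ A
      · rw [← cutEdges_compl]
        exact key' _ (by simpa using hvA) hAc (by rwa [compl_compl])
      · exact key' A hvA hA hAc
  · rintro ⟨-, -, -, hcut⟩
    have hcutW : ∀ A : Finset W, 2 ≤ A.card → A ≠ Finset.univ →
        4 < (cutEdges G (A.map f)).card := by
      intro A hA hAu
      refine hcut _ (by rwa [Finset.card_map]) ?_
      have := (Finset.card_lt_iff_ne_univ A).2 hAu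
      rw [Finset.card_compl, Finset.card_map]
      omega
    refine ⟨?_, ?_⟩
    · by_contra hnp
      obtain ⟨A, hA, hAc, hAsum⟩ := exists_closed_of_not_preconnected H hnp
      have h1 := hbal A
      have h2 := hbal Aᶜ
      have h3 := Finset.card_add_card_compl A
      rw [innerDegree_univ] at hAsum
      -- The two cuts together consist of the four edges at `v`, yet the larger part has
      -- a cut of size more than four.
      rcases Nat.lt_or_ge A.card 2 with hlt | hge
      · have := hcutW Aᶜ (by omega) (by simpa [Finset.compl_eq_univ_iff] using hA.ne_empty)
        omega
      · have := hcutW A hge (by rintro rfl; simp at hAc)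
        omega
    · intro Es hsub hne hprop
      refine two_mul_edgeSubgraphCycleRank_lt H hsub hne fun A hA => ?_
      by_cases hAu : A = Finset.univ
      · rw [hAu, innerDegree_univ, edgeFinset_fromEdgeSet H hsub, Finset.card_univ]
        have := Finset.card_lt_card (Finset.ssubset_iff_subset_ne.2 ⟨hsub, hprop⟩)
        omega
      · have hle : SimpleGraph.fromEdgeSet (Es : Set (Sym2 W)) ≤ H := by
          intro x y h
          rw [SimpleGraph.fromEdgeSet_adj] at h
          exact SimpleGraph.mem_edgeFinset.1 (hsub h.1)
        have h1 := innerDegree_mono hle A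
        have h2 := hbal A
        have h3 := hcutW A hA hAu
        omega

/-- For a finite simple 4-regular graph `Γ` with at least 3 vertices and any vertex `v`,
the vertex-deleted graph `Γ − v` is primitive iff `Γ` is completed primitive. -/
theorem primitive_iff_completedPrimitive {V : Type*} [Fintype V] (G : SimpleGraph V)
    (hreg : ∀ v : V, G.degree v = 4) (hcard : 3 ≤ Fintype.card V) (v : V) :
    IsPrimitive (G.induce (({v} : Set V)ᶜ)) ↔ CompletedPrimitive G := by
  refine isPrimitive_comap_iff G hreg hcard v (Function.Embedding.subtype _) ?_
  ext u
  simp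
end

section
/- Let Γ₁ and Γ₂ be completed primitive simple graphs on disjoint vertex sets with triangles (a₁,b₁,c₁) and (a₂,b₂,c₂) respectively, and let Γ be the completed primitive graph obtained by identifying a₁ with a₂, b₁ with b₂, c₁ with c₂ and deleting the three triangle edges ab, bc, ca. Then the periods multiply: P_Γ = P_{Γ₁} · P_{Γ₂}. -/
/-!
The integral defining the period of the gluing factors as soon as the marked vertices are the three
triangle vertices: with `a` at infinity, `b` at the origin and `c` at the unit vector `e`, every
remaining edge joins vertices coming from one and the same graph, the deleted triangle edges
contribute the factor `1` to the integrands of the two given graphs, and the integrand is therefore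
a product of functions of two disjoint groups of variables. This is `kernProd_glue`, and Tonelli's
theorem gives `posLInt_glue`. The powers of `π` match because `|V| + 3 = |W₁| + |W₂|`.

What remains is that the integral does not depend on the marked vertices `(u, w, z)` and the unit
vector `e`. This holds for every 4-regular graph, convergent or not, when the integral of the
nonnegative integrand is taken in `[0, ∞]` (`posLInt`); the real integral is its `toReal`
(`positionIntegral_eq`). The invariance comes from conformal changes of variables applied to all
integrated positions at once (`lmarginal_cv`):

* a reflection replaces `e` by another unit vector (`posLInt_unit`);
* `x ↦ e - x` exchanges `w` and `z` (`posLInt_swap_wz`);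
* the inversion exchanges `u` and `w` (`posLInt_swap_uw`); its Jacobian `‖x‖⁻⁸` is absorbed because
  each vertex lies on four edges, each of which is rescaled by `‖x‖²`;
* a similarity combined with an inversion replaces `z` by another vertex (`posLInt_swap_zz`).

These moves connect any two triples of distinct vertices (`triple_const`). Regularity is used only
in the multiplicative form `FourReg`, which passes to the gluing (`fourReg_glue`).
-/

open scoped Classical

/-- `x` is one of the three triangle vertices `a`, `b`, `c`. -/
def InTriangle {W : Type*} (a b c x : W) : Prop := x = a ∨ x = b ∨ x = c

/-- The vertex set of the gluing of two graphs along triangles `(a₁,b₁,c₁)` and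
`(a₂,b₂,c₂)`: all vertices of `W₁`, and the vertices of `W₂` other than the triangle
vertices (which get identified with `a₁`, `b₁`, `c₁`). -/
def GluedVert (W₁ W₂ : Type*) (a₂ b₂ c₂ : W₂) : Type _ :=
  W₁ ⊕ {z : W₂ // ¬ InTriangle a₂ b₂ c₂ z}

noncomputable instance {W₁ W₂ : Type*} [Fintype W₁] [Fintype W₂] (a₂ b₂ c₂ : W₂) :
    Fintype (GluedVert W₁ W₂ a₂ b₂ c₂) := by
  unfold GluedVert; infer_instance

/-- The gluing of `G₁` and `G₂` along the triangles `(a₁,b₁,c₁)` and `(a₂,b₂,c₂)`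
(identifying `a₁ ~ a₂`, `b₁ ~ b₂`, `c₁ ~ c₂`), with the three triangle edges deleted. -/
def glueOnTriangles {W₁ W₂ : Type*} (G₁ : SimpleGraph W₁) (G₂ : SimpleGraph W₂)
    (a₁ b₁ c₁ : W₁) (a₂ b₂ c₂ : W₂) : SimpleGraph (GluedVert W₁ W₂ a₂ b₂ c₂) :=
  SimpleGraph.fromRel (fun u v =>
    match u, v with
    | Sum.inl x, Sum.inl y =>
        G₁.Adj x y ∧ ¬ (InTriangle a₁ b₁ c₁ x ∧ InTriangle a₁ b₁ c₁ y)
    | Sum.inl x, Sum.inr y =>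
        (x = a₁ ∧ G₂.Adj a₂ y.1) ∨ (x = b₁ ∧ G₂.Adj b₂ y.1) ∨ (x = c₁ ∧ G₂.Adj c₂ y.1)
    | Sum.inr _, Sum.inl _ => False
    | Sum.inr y, Sum.inr z => G₂.Adj y.1 z.1)

open scoped Classical
open MeasureTheory

/-- 4-dimensional Euclidean space. -/
abbrev R4 := EuclideanSpace ℝ (Fin 4)

/-- Extension of an assignment `x` of position vectors to the vertices outside `{u,w,z}`
by `x_w = 0` and `x_z = e` (the value at `u` is irrelevant). -/
noncomputable def extendPos {V : Type*} (u w z : V) (e : R4)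
    (x : {v : V // v ≠ u ∧ v ≠ w ∧ v ≠ z} → R4) (v : V) : R4 :=
  if v = w then 0
  else if v = z then e
  else if h : v ≠ u ∧ v ≠ w ∧ v ≠ z then x ⟨v, h⟩ else 0

/-- The position-space integrand of the period: the product over all edges of `Γ` not
meeting `u` of `‖x_i − x_j‖⁻²`. -/
noncomputable def periodIntegrand {V : Type*} [Fintype V] (G : SimpleGraph V)
    (u w z : V) (e : R4) (x : {v : V // v ≠ u ∧ v ≠ w ∧ v ≠ z} → R4) : ℝ :=
  ∏ ed ∈ G.edgeFinset.filter (fun ed => u ∉ ed),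
    Sym2.lift ⟨fun i j => (‖extendPos u w z e x i - extendPos u w z e x j‖ ^ 2)⁻¹,
      fun i j => by simp [norm_sub_rev]⟩ ed

/-- The affine position-space integral `I(u,w,z,e)` of a graph. -/
noncomputable def positionIntegral {V : Type*} [Fintype V] (G : SimpleGraph V)
    (u w z : V) (e : R4) : ℝ :=
  ∫ x : {v : V // v ≠ u ∧ v ≠ w ∧ v ≠ z} → R4, periodIntegrand G u w z e x

/-- The period of a completed primitive graph on `ℓ + 2` vertices, computed in affine
position space: `P_Γ = π^{−2(ℓ−1)} I(u,w,z,e)`. -/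
noncomputable def period {V : Type*} [Fintype V] (G : SimpleGraph V)
    (u w z : V) (e : R4) : ℝ :=
  (Real.pi ^ (2 * (Fintype.card V - 3)))⁻¹ * positionIntegral G u w z e

open scoped NNReal ENNReal
open EuclideanGeometry (inversion)

/-! ### Changes of variables in `ℝ⁴` -/

/-- `T` is a change of variables of `ℝ⁴` with Jacobian density `ρ`:
`∫ g(T x) ρ(x) dx = ∫ g(x) dx` for every nonnegative measurable `g`. -/
structure IsCV (T : R4 → R4) (ρ : R4 → ℝ≥0) : Prop where
  measT : Measurable T
  measρ : Measurable ρ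
  lintegral_comp : ∀ g : R4 → ℝ≥0∞, Measurable g → ∫⁻ x, g (T x) * ρ x = ∫⁻ x, g x

theorem isCV_reflection (K : Submodule ℝ R4) : IsCV K.reflection (fun _ => 1) where
  measT := K.reflection.continuous.measurable
  measρ := measurable_const
  lintegral_comp g hg := by
    simpa using K.reflection.measurePreserving.lintegral_comp hg

theorem isCV_const_sub (e : R4) : IsCV (fun x => e - x) (fun _ => 1) where
  measT := by fun_prop
  measρ := measurable_const
  lintegral_comp g hg := by
    simpa using lintegral_sub_left_eq_self (μ := volume) g e

theorem isCV_smul_reflection (K : Submodule ℝ R4) {r : ℝ≥0} (hr : r ≠ 0) :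
    IsCV (fun x => (r : ℝ) • K.reflection x) (fun _ => r ^ 4) where
  measT := by
    have := K.reflection.continuous.measurable
    fun_prop
  measρ := measurable_const
  lintegral_comp g hg := by
    have hg' : Measurable fun x : R4 => g ((r : ℝ) • x) := by fun_prop
    have h1 : ∫⁻ x, g ((r : ℝ) • K.reflection x) = ∫⁻ x, g ((r : ℝ) • x) :=
      K.reflection.measurePreserving.lintegral_comp hg'
    rw [lintegral_mul_const' _ _ ENNReal.coe_ne_top, h1]
    have hr' : (r : ℝ) ≠ 0 := by exact_mod_cast hr
    have h2 := Measure.map_addHaar_smul (volume : Measure R4) hr'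
    have h3 : ∫⁻ x, g ((r : ℝ) • x) = ∫⁻ x, g x ∂(Measure.map ((r : ℝ) • ·) volume) :=
      (lintegral_map hg (by fun_prop)).symm
    rw [h3, h2, lintegral_smul_measure]
    simp only [finrank_euclideanSpace, Fintype.card_fin, smul_eq_mul]
    have h4 : ENNReal.ofReal |((r : ℝ) ^ 4)⁻¹| = (((r ^ 4)⁻¹ : ℝ≥0) : ℝ≥0∞) := by
      rw [abs_of_nonneg (by positivity)]
      rw [← ENNReal.ofReal_coe_nnreal]; simp
    rw [h4, mul_right_comm, ← ENNReal.coe_mul, inv_mul_cancel₀ (pow_ne_zero _ hr)]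
    simp

/-- Discarding the origin does not change an integral. -/
theorem isCV_ne_zero : IsCV id (fun x => if x = 0 then 0 else 1) where
  measT := measurable_id
  measρ := Measurable.ite (measurableSet_singleton 0) measurable_const measurable_const
  lintegral_comp g hg := by
    apply lintegral_congr_ae
    have : ∀ᵐ x : R4, x ≠ 0 := by
      simp [ae_iff]
    filter_upwards [this] with x hx
    simp [hx]

/-- The inversion in the unit sphere has Jacobian `‖x‖⁻⁸` in dimension four. -/
theorem isCV_inversion : IsCV (inversion (0 : R4) 1) (fun x => (‖x‖₊ ^ 8)⁻¹) where
  measT := by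
    unfold EuclideanGeometry.inversion
    simp only [vsub_eq_sub, vadd_eq_add]
    fun_prop
  measρ := by fun_prop
  lintegral_comp g hg := by
    have hs : MeasurableSet ({0}ᶜ : Set R4) := (measurableSet_singleton 0).compl
    have key := lintegral_image_eq_lintegral_abs_det_fderiv_mul volume hs
      (f := inversion (0 : R4) 1)
      (fun x hx => (EuclideanGeometry.hasFDerivAt_inversion (R := 1) hx).hasFDerivWithinAt)
      ((EuclideanGeometry.inversion_injective (0 : R4) one_ne_zero).injOn) g
    have himg : Set.image (inversion (0 : R4) 1) {0}ᶜ = {0}ᶜ := by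
      rw [Set.image_compl_eq (EuclideanGeometry.inversion_bijective (0 : R4) one_ne_zero)]
      simp
    rw [himg] at key
    have hr : (volume : Measure R4).restrict {0}ᶜ = volume :=
      Measure.restrict_eq_self_of_ae_mem (by simp [ae_iff])
    rw [hr] at key
    rw [key]
    apply lintegral_congr_ae
    have : ∀ᵐ x : R4, x ≠ 0 := by simp [ae_iff]
    filter_upwards [this] with x hx
    rw [mul_comm]
    congr 1
    have hdet : |((ℝ ∙ x)ᗮ.reflection : R4 →L[ℝ] R4).det| = 1 := by
      have h := (ℝ ∙ x)ᗮ.det_reflection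
      change |LinearMap.det (ℝ ∙ x)ᗮ.reflection.toLinearMap| = 1
      rw [h, abs_pow]; simp
    have hd : ((1 / dist x 0) ^ 2 • ((ℝ ∙ (x - 0))ᗮ.reflection : R4 →L[ℝ] R4)).det
        = ((1 / dist x 0) ^ 2) ^ 4 * ((ℝ ∙ x)ᗮ.reflection : R4 →L[ℝ] R4).det := by
      rw [sub_zero]
      unfold ContinuousLinearMap.det
      rw [ContinuousLinearMap.toLinearMap_smul, LinearMap.det_smul]
      simp
    rw [hd, abs_mul, hdet, mul_one, dist_zero_right, abs_of_nonneg (by positivity),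
      ← ENNReal.ofReal_coe_nnreal]
    congr 1
    push_cast
    rw [← pow_mul, one_div, inv_pow]

section Marginal

variable {V : Type*}

/-- Simultaneous change of variables in all integrated vertices. -/
theorem lmarginal_cv (T : V → R4 → R4) (ρ : V → R4 → ℝ≥0) (s : Finset V)
    (h : ∀ v ∈ s, IsCV (T v) (ρ v)) (hT : ∀ v, Measurable (T v))
    (f : (V → R4) → ℝ≥0∞) (hf : Measurable f) (x : V → R4) :
    (∫⋯∫⁻_s, fun x => f (fun v => T v (x v)) * ((∏ v ∈ s, ρ v (x v) : ℝ≥0) : ℝ≥0∞)) x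
      = (∫⋯∫⁻_s, f) (fun v => T v (x v)) := by
  induction s using Finset.induction generalizing f x with
  | empty => simp
  | insert i s hi ih =>
    have hρ : ∀ v ∈ insert i s, Measurable fun x : V → R4 => ρ v (x v) := fun v hv =>
      (h v hv).measρ.comp (measurable_pi_apply v)
    have hTm : Measurable fun x : V → R4 => fun v => T v (x v) :=
      measurable_pi_lambda _ fun v => (hT v).comp (measurable_pi_apply v)
    rw [lmarginal_insert' _ _ hi, lmarginal_insert' _ hf hi, ← ih]
    · congr 1
      ext y
      have h1 : ∀ t : R4, ∏ v ∈ insert i s, ρ v (Function.update y i t v)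
          = ρ i t * ∏ v ∈ s, ρ v (y v) := by
        intro t
        rw [Finset.prod_insert hi]
        congr 1
        · simp
        · refine Finset.prod_congr rfl fun v hv => ?_
          rw [Function.update_of_ne (ne_of_mem_of_not_mem hv hi)]
      have h2 : ∀ t : R4, (fun v => T v (Function.update y i t v))
          = Function.update (fun v => T v (y v)) i (T i t) := by
        intro t
        ext1 v
        rcases eq_or_ne v i with rfl | hv
        · simp
        · simp [hv]
      simp_rw [h1, h2, ENNReal.coe_mul, ← mul_assoc]
      rw [lintegral_mul_const' _ _ ENNReal.coe_ne_top]
      rw [(h i (Finset.mem_insert_self i s)).lintegral_comp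
        (fun t => f (Function.update (fun v => T v (y v)) i t))
        (hf.comp (measurable_update _))]
    · exact fun v hv => h v (Finset.mem_insert_of_mem hv)
    · have : Measurable fun p : (V → R4) × R4 => f (Function.update p.1 i p.2) :=
        hf.comp measurable_update'
      exact this.lintegral_prod_right'
    · exact (hf.comp hTm).mul (Finset.measurable_prod _ hρ).coe_nnreal_ennreal

end Marginal

/-! ### Conformal invariance of the integral -/

section Invariance

variable {V : Type*}

theorem lmarginal_congr_fun {s : Finset V} {f g : (V → R4) → ℝ≥0∞} {x : V → R4}
    (h : ∀ y : V → R4, (∀ i ∉ s, y i = x i) → f y = g y) :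
    (∫⋯∫⁻_s, f) x = (∫⋯∫⁻_s, g) x := by
  unfold lmarginal
  refine lintegral_congr fun y => h _ fun i hi => ?_
  simp [Function.updateFinset, hi]

/-- The product of a vertex weight over the two endpoints of an edge. -/
def edgeMul (n : V → ℝ≥0) (e : Sym2 V) : ℝ≥0 :=
  Sym2.lift ⟨fun i j => n i * n j, fun i j => mul_comm (n i) (n j)⟩ e

/-- The propagator of an edge, with the convention that edges at `u` contribute `1`. -/
noncomputable def kern (u : V) (x : V → R4) (e : Sym2 V) : ℝ≥0 :=
  if u ∈ e then 1 else
    Sym2.lift ⟨fun i j => (‖x i - x j‖₊ ^ 2)⁻¹, fun i j => by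
      beta_reduce
      rw [← nnnorm_neg (x i - x j), neg_sub]⟩ e

variable [Fintype V]

/-- The period integrand as a function of the positions of all vertices. -/
noncomputable def kernProd (G : SimpleGraph V) (u : V) (x : V → R4) : ℝ≥0 :=
  ∏ e ∈ G.edgeFinset, kern u x e

/-- A multiplicative form of 4-regularity: each vertex weight occurs four times in the product
over all edges. -/
def FourReg (G : SimpleGraph V) : Prop :=
  ∀ n : V → ℝ≥0, (∀ v, n v ≠ 0) → ∏ e ∈ G.edgeFinset, edgeMul n e = ∏ v, n v ^ 4

/-- The unnormalised period, with values in `[0, ∞]`: the marginal of `kernProd G u` over all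
vertices but `u`, `w`, `z`, evaluated at `x_w = 0`, `x_z = e`. The value `x_u = 0` is a dummy, since
`kernProd G u` does not depend on it. -/
noncomputable def posLInt (G : SimpleGraph V) (u w z : V) (e : R4) : ℝ≥0∞ :=
  (∫⋯∫⁻_({u, w, z}ᶜ : Finset V), fun x => (kernProd G u x : ℝ≥0∞))
    (fun v => if v = z then e else 0)

theorem fourReg_of_degree (G : SimpleGraph V) (h : ∀ v, G.degree v = 4) : FourReg G := by
  intro n _
  have h1 : ∀ e ∈ G.edgeFinset, edgeMul n e = ∏ v, if v ∈ e then n v else 1 := by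
    intro e he
    induction e using Sym2.ind with
    | _ i j =>
      have hij : i ≠ j := by
        rw [SimpleGraph.mem_edgeFinset] at he
        exact G.ne_of_adj he
      rw [Finset.prod_ite]
      have : (Finset.univ.filter fun v => v ∈ s(i, j)) = {i, j} := by
        ext v; simp
      rw [this, Finset.prod_pair hij]
      simp [edgeMul]
  rw [Finset.prod_congr rfl h1, Finset.prod_comm]
  refine Finset.prod_congr rfl fun v _ => ?_
  rw [Finset.prod_ite, Finset.prod_const, Finset.prod_const_one, mul_one]
  congr 1
  rw [← h v, ← SimpleGraph.card_incidenceFinset_eq_degree, SimpleGraph.incidenceFinset_eq_filter]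

theorem measurable_kernProd (G : SimpleGraph V) (u : V) :
    Measurable fun x : V → R4 => (kernProd G u x : ℝ≥0∞) := by
  refine Measurable.coe_nnreal_ennreal (Finset.measurable_prod _ fun e _ => ?_)
  induction e using Sym2.ind with
  | _ i j =>
    unfold kern
    split_ifs
    · exact measurable_const
    · simp only [Sym2.lift_mk]
      fun_prop

/-- Covariance of the integrand under an edgewise rescaling by vertex weights. -/
theorem kernProd_rescale {G : SimpleGraph V} (hG : FourReg G) {u u' : V} {x x' : V → R4}
    (n : V → ℝ≥0) (hn : ∀ v, n v ≠ 0)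
    (h : ∀ i j, i ≠ j → kern u' x' s(i, j) = kern u x s(i, j) * (n i * n j)) :
    kernProd G u' x' = kernProd G u x * ∏ v, n v ^ 4 := by
  unfold kernProd
  rw [← hG n hn, ← Finset.prod_mul_distrib]
  refine Finset.prod_congr rfl fun e he => ?_
  induction e using Sym2.ind with
  | _ i j =>
    rw [SimpleGraph.mem_edgeFinset] at he
    exact h i j (G.ne_of_adj he)

theorem kernProd_isometry (G : SimpleGraph V) (u : V) {x x' : V → R4}
    (h : ∀ i j, i ≠ u → j ≠ u → ‖x' i - x' j‖ = ‖x i - x j‖) :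
    kernProd G u x' = kernProd G u x := by
  unfold kernProd
  refine Finset.prod_congr rfl fun e _ => ?_
  induction e using Sym2.ind with
  | _ i j =>
    unfold kern
    split_ifs with hu
    · rfl
    · simp only [Sym2.mem_iff, not_or] at hu
      have := h i j (Ne.symm hu.1) (Ne.symm hu.2)
      have h' : ‖x' i - x' j‖₊ = ‖x i - x j‖₊ := NNReal.eq this
      simp [h']

theorem posLInt_unit (G : SimpleGraph V) (u w z : V) {e e' : R4} (he : ‖e‖ = ‖e'‖) :
    posLInt G u w z e = posLInt G u w z e' := by
  unfold posLInt
  have h := lmarginal_cv (V := V) (fun _ => (ℝ ∙ (e - e'))ᗮ.reflection) (fun _ _ => 1)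
    ({u, w, z}ᶜ) (fun v _ => isCV_reflection _) (fun v => (isCV_reflection _).measT)
    _ (measurable_kernProd G u) (fun v => if v = z then e else 0)
  have hb : (fun v : V => (ℝ ∙ (e - e'))ᗮ.reflection (if v = z then e else 0))
      = fun v => if v = z then e' else 0 := by
    ext1 v
    split_ifs
    · exact Submodule.reflection_sub he
    · simp
  rw [hb] at h
  rw [← h]
  refine lmarginal_congr_fun fun y _ => ?_
  rw [kernProd_isometry G u (x := y) (x' := fun v => (ℝ ∙ (e - e'))ᗮ.reflection (y v))]
  · simp
  · intro i j _ _
    rw [← map_sub, LinearIsometryEquiv.norm_map]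

theorem posLInt_swap_wz (G : SimpleGraph V) {u w z : V} (huw : u ≠ w) (huz : u ≠ z) (hwz : w ≠ z)
    (e : R4) : posLInt G u w z e = posLInt G u z w e := by
  unfold posLInt
  have hm : ∀ v : V, Measurable (if v = u then id else fun x : R4 => e - x) := by
    intro v
    split_ifs
    · exact measurable_id
    · exact (isCV_const_sub e).measT
  have h := lmarginal_cv (V := V) (fun v => if v = u then id else fun x => e - x) (fun _ _ => 1)
    ({u, w, z}ᶜ) (fun v hv => by
      have : v ≠ u := by rintro rfl; simp at hv
      simpa [this] using isCV_const_sub e) hm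
    _ (measurable_kernProd G u) (fun v => if v = z then e else 0)
  have hs : ({u, z, w} : Finset V)ᶜ = {u, w, z}ᶜ := by
    congr 2; exact Finset.pair_comm _ _
  rw [hs]
  trans
  swap
  · refine h.trans (lmarginal_congr _ _ fun v hv => ?_)
    simp only [Finset.mem_compl, not_not, Finset.mem_insert, Finset.mem_singleton] at hv
    rcases hv with rfl | rfl | rfl
    · simp [huw, huz]
    · simp [hwz, huw.symm]
    · simp [hwz.symm, huz.symm]
  · refine lmarginal_congr_fun fun y _ => ?_
    rw [kernProd_isometry G u (x := y)
      (x' := fun v => (if v = u then id else fun x => e - x) (y v))]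
    · simp
    · intro i j hi hj
      simp [hi, hj, norm_sub_rev]

theorem nnnorm_inversion (a : R4) : ‖inversion (0 : R4) 1 a‖₊ = ‖a‖₊⁻¹ := by
  have h := EuclideanGeometry.dist_inversion_center (0 : R4) a 1
  apply NNReal.eq
  simpa using h

theorem nnnorm_inversion_sub {a b : R4} (ha : a ≠ 0) (hb : b ≠ 0) :
    ‖inversion (0 : R4) 1 a - inversion (0 : R4) 1 b‖₊ = (‖a‖₊ * ‖b‖₊)⁻¹ * ‖a - b‖₊ := by
  have h := EuclideanGeometry.dist_inversion_inversion ha hb 1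
  apply NNReal.eq
  simpa [dist_eq_norm] using h

/-- Inversion at the vertex placed at the origin exchanges it with the vertex at infinity. -/
theorem posLInt_swap_uw {G : SimpleGraph V} (hG : FourReg G) {u w z : V} (huw : u ≠ w)
    (huz : u ≠ z) (hwz : w ≠ z) {e : R4} (he : ‖e‖ = 1) :
    posLInt G u w z e = posLInt G w u z e := by
  have he0 : e ≠ 0 := by rintro rfl; simp at he
  unfold posLInt
  have hs : ({w, u, z} : Finset V)ᶜ = {u, w, z}ᶜ := by
    congr 1; exact Finset.insert_comm _ _ _
  rw [hs]
  set s : Finset V := {u, w, z}ᶜ with hsdef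
  set b : V → R4 := fun v => if v = z then e else 0 with hb
  have hmT : Measurable fun x : V → R4 => fun v => inversion (0 : R4) 1 (x v) :=
    measurable_pi_lambda _ fun v => isCV_inversion.measT.comp (measurable_pi_apply v)
  have hb' : (fun v => inversion (0 : R4) 1 (b v)) = b := by
    ext1 v
    simp only [hb]
    split_ifs
    · simp [EuclideanGeometry.inversion, he]
    · simp
  have h1 := lmarginal_cv (V := V) (fun _ => inversion (0 : R4) 1) (fun _ x => (‖x‖₊ ^ 8)⁻¹)
    s (fun v _ => isCV_inversion) (fun v => isCV_inversion.measT)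
    _ (measurable_kernProd G w) b
  rw [hb'] at h1
  rw [← h1]
  have h2 : ∀ f : (V → R4) → ℝ≥0∞, Measurable f → (∫⋯∫⁻_s, f) b
      = (∫⋯∫⁻_s, fun x => f x * ((∏ v ∈ s, if x v = 0 then 0 else 1 : ℝ≥0) : ℝ≥0∞)) b :=
    fun f hf => (lmarginal_cv (V := V) (fun _ => id) (fun _ x => if x = 0 then 0 else 1)
      s (fun v _ => isCV_ne_zero) (fun v => isCV_ne_zero.measT) f hf b).symm
  refine (h2 _ (measurable_kernProd G u)).trans (Eq.trans ?_ (h2 _ ?_).symm)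
  swap
  · refine ((measurable_kernProd G w).comp hmT).mul
      (Finset.measurable_prod _ fun v _ => ?_).coe_nnreal_ennreal
    exact isCV_inversion.measρ.comp (measurable_pi_apply v)
  refine lmarginal_congr_fun fun y hy => ?_
  by_cases hy0 : ∃ v ∈ s, y v = 0
  · obtain ⟨v, hv, hv0⟩ := hy0
    have : ∏ v ∈ s, (if y v = 0 then (0 : ℝ≥0) else 1) = 0 :=
      Finset.prod_eq_zero hv (by simp [hv0])
    simp [this]
  push Not at hy0
  congr 1
  norm_cast
  have hyu : y u = 0 := by rw [hy u (by simp [hsdef])]; simp [hb, huz]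
  have hyw : y w = 0 := by rw [hy w (by simp [hsdef])]; simp [hb, hwz]
  have hyz : y z = e := by rw [hy z (by simp [hsdef])]; simp [hb]
  have hne : ∀ v, v ≠ u → v ≠ w → y v ≠ 0 := by
    intro v hvu hvw
    rcases eq_or_ne v z with rfl | hvz
    · rw [hyz]; exact he0
    · exact hy0 v (by simp [hsdef, hvu, hvw, hvz])
  let n : V → ℝ≥0 := fun v => if v = u ∨ v = w then 1 else ‖y v‖₊ ^ 2
  have hn : ∀ v, n v ≠ 0 := by
    intro v
    simp only [n]
    split_ifs with hv
    · exact one_ne_zero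
    · push Not at hv
      exact pow_ne_zero _ (nnnorm_ne_zero_iff.2 (hne v hv.1 hv.2))
  have hprod : ∏ v, n v ^ 4 = ∏ v ∈ s, ‖y v‖₊ ^ 8 := by
    symm
    rw [← Finset.prod_subset (Finset.subset_univ s)]
    · refine Finset.prod_congr rfl fun v hv => ?_
      simp only [hsdef, Finset.mem_compl, Finset.mem_insert, Finset.mem_singleton, not_or] at hv
      simp [n, hv.1, hv.2.1, ← pow_mul]
    · intro v _ hv
      simp only [hsdef, Finset.mem_compl, not_not, Finset.mem_insert, Finset.mem_singleton] at hv
      have hez : ‖y z‖₊ = 1 := NNReal.eq (by simp [hyz, he])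
      rcases hv with rfl | rfl | rfl
      · simp [n]
      · simp [n]
      · simp [n, hez]
  rw [kernProd_rescale hG (u := u) (x := y)
      (u' := w) (x' := fun v => inversion (0 : R4) 1 (y v)) n hn, hprod, mul_assoc,
    ← Finset.prod_mul_distrib]
  · rw [Finset.prod_eq_one, mul_one]
    intro v hv
    exact mul_inv_cancel₀ (pow_ne_zero _ (nnnorm_ne_zero_iff.2 (hy0 v hv)))
  · -- edgewise comparison, according to which endpoints lie in `{u, w}`
    intro i j hij
    by_cases hiu : i = u
    · have hju : j ≠ u := fun h => hij (hiu.trans h.symm)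
      by_cases hjw : j = w
      · simp [kern, n, hiu, hjw]
      · simp [kern, n, hiu, hju, hjw, Ne.symm hjw, huw.symm, hyu, nnnorm_inversion]
    by_cases hju : j = u
    · by_cases hiw : i = w
      · simp [kern, n, hju, hiw]
      · simp [kern, n, hiu, hju, hiw, Ne.symm hiw, huw.symm, hyu, nnnorm_inversion]
    by_cases hiw : i = w
    · have hjw : j ≠ w := fun h => hij (hiw.trans h.symm)
      have hj := nnnorm_ne_zero_iff.2 (hne j hju hjw)
      simp [kern, n, hju, hiw, hjw, Ne.symm hju, huw, hyw, hj]
    by_cases hjw : j = w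
    · have hi := nnnorm_ne_zero_iff.2 (hne i hiu hiw)
      simp [kern, n, hiu, hiw, hjw, Ne.symm hiu, huw, hyw, hi]
    simp only [kern, n, hiu, hju, hiw, hjw, Ne.symm hiu, Ne.symm hju, Ne.symm hiw, Ne.symm hjw,
      Sym2.mem_iff, or_self, if_false, Sym2.lift_mk,
      nnnorm_inversion_sub (hne i hiu hiw) (hne j hju hjw)]
    rw [mul_pow, mul_inv, inv_pow, inv_inv, mul_pow, mul_comm]

/-- Exchanging the roles of two finite vertices `z` and `z'`. With `y` the free position, the
similarity fixing the origin (a reflection followed by the dilation by `‖y‖`) that sends `e` to `y`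
also sends the inverse point `y / ‖y‖ ^ 2` to `e`; so this similarity in the other variables and an
inversion in `y` turn one integral into the other. -/
theorem posLInt_swap_zz {G : SimpleGraph V} (hG : FourReg G) {u w z z' : V} (huw : u ≠ w)
    (huz : u ≠ z) (hwz : w ≠ z) (huz' : u ≠ z') (hwz' : w ≠ z') (hzz : z ≠ z')
    {e : R4} (he : ‖e‖ = 1) :
    posLInt G u w z e = posLInt G u w z' e := by
  have he0 : e ≠ 0 := by rintro rfl; simp at he
  set s : Finset V := {u, w, z, z'}ᶜ with hs
  have hz's : z' ∉ s := by simp [hs]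
  have hzs : z ∉ s := by simp [hs]
  have hus : u ∉ s := by simp [hs]
  have hws : w ∉ s := by simp [hs]
  have hs1 : ({u, w, z} : Finset V)ᶜ = insert z' s := by
    ext v; simp only [hs, Finset.mem_compl, Finset.mem_insert, Finset.mem_singleton]
    rcases eq_or_ne v z' with rfl | h
    · simp [huz'.symm, hwz'.symm, hzz.symm]
    · simp [h]
  have hs2 : ({u, w, z'} : Finset V)ᶜ = insert z s := by
    ext v; simp only [hs, Finset.mem_compl, Finset.mem_insert, Finset.mem_singleton]
    rcases eq_or_ne v z with rfl | h
    · simp [huz.symm, hwz.symm, hzz]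
    · simp [h]
  have hmF := measurable_kernProd G u
  let b : R4 → R4 → V → R4 := fun p q v => if v = z then p else if v = z' then q else 0
  let H : R4 → R4 → ℝ≥0∞ := fun p q => (∫⋯∫⁻_s, fun x => (kernProd G u x : ℝ≥0∞)) (b p q)
  have hL : posLInt G u w z e = ∫⁻ y, H e y := by
    unfold posLInt
    rw [hs1, lmarginal_insert _ hmF hz's]
    refine lintegral_congr fun y => ?_
    refine congrArg _ (funext fun v => ?_)
    rcases eq_or_ne v z' with rfl | h
    · simp [b, hzz.symm]
    · simp [b, h]
  have hR : posLInt G u w z' e = ∫⁻ y, H y e := by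
    unfold posLInt
    rw [hs2, lmarginal_insert _ hmF hzs]
    refine lintegral_congr fun y => ?_
    refine congrArg _ (funext fun v => ?_)
    rcases eq_or_ne v z with rfl | h
    · simp [b]
    · simp [b, h]
  have hHm : Measurable fun y => H e y := by
    refine (Measurable.lmarginal (fun _ => volume) hmF).comp (measurable_pi_lambda _ fun v => ?_)
    simp only [b]
    split_ifs <;> fun_prop
  rw [hL, hR, ← isCV_inversion.lintegral_comp _ hHm]
  have hae : ∀ᵐ x : R4, x ≠ 0 := by simp [ae_iff]
  refine lintegral_congr_ae ?_
  filter_upwards [hae] with y hy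
  have hr0 : ‖y‖₊ ≠ 0 := nnnorm_ne_zero_iff.2 hy
  have hr0' : ‖y‖ ≠ 0 := norm_ne_zero_iff.2 hy
  -- the reflection exchanging `e` and `y / ‖y‖`
  set K : Submodule ℝ R4 := (ℝ ∙ (e - ‖y‖⁻¹ • y))ᗮ with hK
  have hnorm : ‖e‖ = ‖‖y‖⁻¹ • y‖ := by
    rw [norm_smul, norm_inv, norm_norm, he, inv_mul_cancel₀ hr0']
  have hKe : K.reflection e = ‖y‖⁻¹ • y := Submodule.reflection_sub hnorm
  have hKy : K.reflection y = ‖y‖ • e := by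
    have : K.reflection (‖y‖⁻¹ • y) = e :=
      (congrArg K.reflection hKe).symm.trans (K.reflection_reflection e)
    refine Eq.trans ?_ (congrArg (‖y‖ • ·) this)
    simp only [map_smul, smul_smul, mul_inv_cancel₀ hr0', one_smul]
  have hcv := lmarginal_cv (V := V) (fun _ x => (‖y‖₊ : ℝ) • K.reflection x)
    (fun _ _ => ‖y‖₊ ^ 4) s (fun v _ => isCV_smul_reflection K hr0)
    (fun v => (isCV_smul_reflection K hr0).measT) _ hmF (b e (inversion 0 1 y))
  have hb : (fun v => (‖y‖₊ : ℝ) • K.reflection (b e (inversion 0 1 y) v)) = b y e := by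
    ext1 v
    simp only [b]
    split_ifs
    · rw [hKe, coe_nnnorm, smul_smul, mul_inv_cancel₀ hr0', one_smul]
    · simp only [EuclideanGeometry.inversion, vsub_eq_sub, sub_zero, vadd_eq_add, add_zero,
        dist_zero_right, map_smul, hKy, smul_smul, coe_nnnorm]
      convert one_smul ℝ e using 2
      field_simp
    · simp
  rw [hb] at hcv
  change H e (inversion 0 1 y) * _ = H y e
  simp only [H]
  rw [← hcv]
  unfold lmarginal
  rw [← lintegral_mul_const' _ _ ENNReal.coe_ne_top]
  refine lintegral_congr fun t => ?_
  generalize Function.updateFinset (b e (inversion 0 1 y)) s t = x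
  -- weights making edges at `u` neutral
  let n : V → ℝ≥0 := fun v => if v = u then ‖y‖₊ else ‖y‖₊⁻¹
  have hn : ∀ v, n v ≠ 0 := by
    intro v
    simp only [n]
    split_ifs
    · exact hr0
    · exact inv_ne_zero hr0
  beta_reduce
  norm_cast
  rw [kernProd_rescale hG (u := u) (x := x)
    (u' := u) (x' := fun v => ‖y‖ • K.reflection (x v)) n hn, mul_assoc]
  · congr 1
    have huniv : (Finset.univ : Finset V) = insert u (insert w (insert z (insert z' s))) := by
      ext v; simp only [hs, Finset.mem_compl, Finset.mem_insert, Finset.mem_singleton,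
        Finset.mem_univ, true_iff]; tauto
    rw [huniv, Finset.prod_insert (by simp [huw, huz, huz', hus]),
      Finset.prod_insert (by simp [hwz, hwz', hws]), Finset.prod_insert (by simp [hzz, hzs]),
      Finset.prod_insert hz's]
    have h1 : (∏ v ∈ s, n v ^ 4) * ∏ v ∈ s, ‖y‖₊ ^ 4 = 1 := by
      rw [← Finset.prod_mul_distrib]
      refine Finset.prod_eq_one fun v hv => ?_
      have : v ≠ u := ne_of_mem_of_not_mem hv hus
      simp only [n, this, if_false]
      rw [← mul_pow, inv_mul_cancel₀ hr0, one_pow]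
    rw [mul_assoc, mul_assoc, mul_assoc, mul_assoc, h1]
    simp only [n, huw.symm, huz.symm, huz'.symm, if_true, if_false, mul_one]
    field_simp
  · intro i j hij
    by_cases hiu : i = u <;> by_cases hju : j = u
    · exact absurd (hiu.trans hju.symm) hij
    · simp [kern, n, hiu, hju, mul_inv_cancel₀ hr0]
    · simp [kern, n, hiu, hju, inv_mul_cancel₀ hr0]
    · simp only [kern, n, hiu, hju, Ne.symm hiu, Ne.symm hju, Sym2.mem_iff, or_self, if_false,
        Sym2.lift_mk, ← smul_sub, ← map_sub, nnnorm_smul, LinearIsometryEquiv.nnnorm_map]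
      rw [mul_pow, mul_inv, mul_comm]
      simp [pow_two]

end Invariance

/-! ### Independence of the marked vertices -/

section Independence

/-- A function of triples of distinct points that is symmetric and insensitive to moving the third
point is constant. -/
theorem triple_const {V α : Type*} (P : V → V → V → α)
    (h12 : ∀ u w z, u ≠ w → u ≠ z → w ≠ z → P u w z = P w u z)
    (h23 : ∀ u w z, u ≠ w → u ≠ z → w ≠ z → P u w z = P u z w)
    (h3 : ∀ u w z z', u ≠ w → u ≠ z → w ≠ z → u ≠ z' → w ≠ z' → P u w z = P u w z')
    {u w z u' w' z' : V} (huw : u ≠ w) (huz : u ≠ z) (hwz : w ≠ z)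
    (huw' : u' ≠ w') (huz' : u' ≠ z') (hwz' : w' ≠ z') : P u w z = P u' w' z' := by
  have s1 : ∃ w₁ z₁, u' ≠ w₁ ∧ u' ≠ z₁ ∧ w₁ ≠ z₁ ∧ P u w z = P u' w₁ z₁ := by
    by_cases h : u' = w
    · subst h
      exact ⟨u, z, huw.symm, hwz, huz, h12 _ _ _ huw huz hwz⟩
    by_cases h' : u' = z
    · subst h'
      refine ⟨u, w, huz.symm, hwz.symm, huw, ?_⟩
      rw [h23 _ _ _ huw huz hwz, h12 _ _ _ huz huw hwz.symm]
    · refine ⟨w, z, h, h', hwz, ?_⟩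
      rw [h12 _ _ _ huw huz hwz, h23 _ _ _ huw.symm hwz huz,
        h3 _ _ _ u' hwz huw.symm huz.symm (Ne.symm h) (Ne.symm h'),
        h23 _ _ _ hwz (Ne.symm h) (Ne.symm h'), h12 _ _ _ (Ne.symm h) hwz h']
  obtain ⟨w₁, z₁, a1, a2, a3, e1⟩ := s1
  have s2 : ∃ z₂, u' ≠ z₂ ∧ w' ≠ z₂ ∧ P u' w₁ z₁ = P u' w' z₂ := by
    by_cases h : w' = w₁
    · subst h
      exact ⟨z₁, a2, a3, rfl⟩
    by_cases h' : w' = z₁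
    · subst h'
      exact ⟨w₁, a1, a3.symm, h23 _ _ _ a1 a2 a3⟩
    · refine ⟨z₁, a2, h', ?_⟩
      rw [h23 _ _ _ a1 a2 a3, h3 _ _ _ w' a2 a1 a3.symm huw' (Ne.symm h'),
        h23 _ _ _ a2 huw' (Ne.symm h')]
  obtain ⟨z₂, b1, b2, e2⟩ := s2
  rw [e1, e2, h3 _ _ _ z' huw' b1 b2 huz' hwz']

variable {V : Type*} [Fintype V]

/-- The unnormalised period does not depend on the marked vertices or on the unit vector. -/
theorem posLInt_indep {G : SimpleGraph V} (hG : FourReg G) {u w z u' w' z' : V} {e e' : R4}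
    (huw : u ≠ w) (huz : u ≠ z) (hwz : w ≠ z) (he : ‖e‖ = 1)
    (huw' : u' ≠ w') (huz' : u' ≠ z') (hwz' : w' ≠ z') (he' : ‖e'‖ = 1) :
    posLInt G u w z e = posLInt G u' w' z' e' := by
  rw [posLInt_unit G u w z (he.trans he'.symm)]
  refine triple_const (fun u w z => posLInt G u w z e') ?_ ?_ ?_ huw huz hwz huw' huz' hwz'
  · exact fun u w z h1 h2 h3 => posLInt_swap_uw hG h1 h2 h3 he'
  · exact fun u w z h1 h2 h3 => posLInt_swap_wz G h1 h2 h3 e'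
  · intro u w z z' h1 h2 h3 h4 h5
    rcases eq_or_ne z z' with rfl | h
    · rfl
    · exact posLInt_swap_zz hG h1 h2 h3 h4 h5 h he'

theorem periodIntegrand_eq (G : SimpleGraph V) (u w z : V) (e : R4)
    (x : {v : V // v ≠ u ∧ v ≠ w ∧ v ≠ z} → R4) :
    periodIntegrand G u w z e x
      = ((kernProd G u (extendPos u w z e x) : ℝ≥0) : ℝ≥0∞).toReal := by
  unfold periodIntegrand kernProd
  rw [ENNReal.coe_toReal, NNReal.coe_prod, Finset.prod_filter]
  refine Finset.prod_congr rfl fun ed _ => ?_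
  induction ed using Sym2.ind with
  | _ i j =>
    unfold kern
    by_cases h : u ∈ s(i, j)
    · simp [h]
    · simp only [h, not_false_eq_true, if_true, if_false, Sym2.lift_mk]
      simp

theorem positionIntegral_eq (G : SimpleGraph V) {u w z : V} (huw : u ≠ w) (huz : u ≠ z)
    (hwz : w ≠ z) (e : R4) :
    positionIntegral G u w z e = (posLInt G u w z e).toReal := by
  unfold positionIntegral
  simp_rw [periodIntegrand_eq]
  have hmext : Measurable (extendPos u w z e) := by
    refine measurable_pi_lambda _ fun v => ?_
    unfold extendPos
    split_ifs <;> fun_prop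
  have hmF := measurable_kernProd G u
  refine (integral_toReal (hmF.comp hmext).aemeasurable (by simp)).trans ?_
  congr 1
  let ε : {v : V // v ≠ u ∧ v ≠ w ∧ v ≠ z} ≃ (({u, w, z}ᶜ : Finset V) : Type _) :=
    Equiv.subtypeEquivRight fun v => by simp
  have hmp := volume_measurePreserving_piCongrLeft (fun _ => R4) ε
  unfold posLInt lmarginal
  change _ = ∫⁻ y : (({u, w, z}ᶜ : Finset V) : Type _) → R4, _
  refine Eq.trans ?_ (hmp.lintegral_comp (hmF.comp (measurable_updateFinset
    (s := ({u, w, z}ᶜ : Finset V)) (x := fun v => if v = z then e else 0))))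
  refine lintegral_congr fun x => ?_
  simp only [Function.comp_apply]
  congr 2
  ext1 v
  by_cases hv : v ∈ ({u, w, z}ᶜ : Finset V)
  · have hv' : v ≠ u ∧ v ≠ w ∧ v ≠ z := by simpa using hv
    have h1 := Equiv.piCongrLeft_apply_apply (fun _ => R4) ε x ⟨v, hv'⟩
    simp only [Function.updateFinset, hv, dif_pos, extendPos, hv', if_false]
    rw [dif_pos hv']
    exact h1.symm
  · simp only [Function.updateFinset, hv, dif_neg, not_false_eq_true]
    have hv' : v = u ∨ v = w ∨ v = z := by
      simp at hv
      tauto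
    unfold extendPos
    rcases hv' with rfl | rfl | rfl
    · simp [huw, huz]
    · simp [hwz]
    · simp [hwz.symm]

end Independence

/-! ### The gluing -/

section Gluing

variable {W : Type*} [Fintype W]

/-- The edges of `G` not contained in the triangle `a`, `b`, `c`. -/
noncomputable def outerEdges (G : SimpleGraph W) (a b c : W) : Finset (Sym2 W) :=
  G.edgeFinset.filter fun e => ¬ ∀ v ∈ e, InTriangle a b c v

theorem prod_outerEdges {M : Type*} [CommMonoid M] {G : SimpleGraph W} {a b c : W}
    (ht : G.Adj a b ∧ G.Adj b c ∧ G.Adj a c) (g : Sym2 W → M) :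
    ∏ e ∈ G.edgeFinset, g e
      = (∏ e ∈ outerEdges G a b c, g e) * (g s(a, b) * g s(b, c) * g s(a, c)) := by
  obtain ⟨hab, hbc, hac⟩ := ht
  have nab := hab.ne
  have nbc := hbc.ne
  have nac := hac.ne
  rw [outerEdges, ← Finset.prod_filter_not_mul_prod_filter G.edgeFinset
    (fun e => ∀ v ∈ e, InTriangle a b c v)]
  congr 1
  have : G.edgeFinset.filter (fun e => ∀ v ∈ e, InTriangle a b c v)
      = {s(a, b), s(b, c), s(a, c)} := by
    ext e
    induction e using Sym2.ind with
    | _ i j =>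
      rw [Finset.mem_filter]
      simp only [SimpleGraph.mem_edgeFinset, SimpleGraph.mem_edgeSet,
        Sym2.mem_iff, InTriangle, Finset.mem_insert, Finset.mem_singleton, Sym2.eq_iff,
        forall_eq_or_imp, forall_eq]
      constructor
      · rintro ⟨hij, hi, hj⟩
        have := hij.ne
        grind
      · rintro ((⟨rfl, rfl⟩ | ⟨rfl, rfl⟩) | (⟨rfl, rfl⟩ | ⟨rfl, rfl⟩) | ⟨rfl, rfl⟩ | ⟨rfl, rfl⟩) <;>
          simp [hab, hbc, hac, hab.symm, hbc.symm, hac.symm]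
  refine (Finset.prod_congr (by convert this) fun _ _ => rfl).trans ?_
  rw [Finset.prod_insert, Finset.prod_pair, mul_assoc]
  · simp [nbc, nab.symm, nac.symm]
  · simp [nab, nbc, nac, nab.symm]

variable {W₁ W₂ : Type*}

/-- The vertices of the first graph inside the glued graph. -/
def glueL (a₂ b₂ c₂ : W₂) (x : W₁) : GluedVert W₁ W₂ a₂ b₂ c₂ := Sum.inl x

/-- The vertices of the second graph inside the glued graph, the triangle `(a₂, b₂, c₂)` being
sent to `(a₁, b₁, c₁)`. -/
noncomputable def glueR (a₁ b₁ c₁ : W₁) (a₂ b₂ c₂ : W₂) (y : W₂) : GluedVert W₁ W₂ a₂ b₂ c₂ :=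
  if h : InTriangle a₂ b₂ c₂ y then
    Sum.inl (if y = a₂ then a₁ else if y = b₂ then b₁ else c₁)
  else Sum.inr ⟨y, h⟩

variable {a₁ b₁ c₁ : W₁} {a₂ b₂ c₂ : W₂}

theorem glueL_injective : Function.Injective (glueL (W₁ := W₁) a₂ b₂ c₂) :=
  Sum.inl_injective

theorem glueR_a : glueR a₁ b₁ c₁ a₂ b₂ c₂ a₂ = glueL a₂ b₂ c₂ a₁ := by
  simp [glueR, glueL, InTriangle]; rfl

theorem glueR_b (h : a₂ ≠ b₂) : glueR a₁ b₁ c₁ a₂ b₂ c₂ b₂ = glueL a₂ b₂ c₂ b₁ := by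
  simp [glueR, glueL, InTriangle, h.symm]; rfl

theorem glueR_c (h : a₂ ≠ c₂) (h' : b₂ ≠ c₂) :
    glueR a₁ b₁ c₁ a₂ b₂ c₂ c₂ = glueL a₂ b₂ c₂ c₁ := by
  simp [glueR, glueL, InTriangle, h.symm, h'.symm]; rfl

theorem glueR_of_not (y : W₂) (h : ¬ InTriangle a₂ b₂ c₂ y) :
    glueR a₁ b₁ c₁ a₂ b₂ c₂ y = Sum.inr ⟨y, h⟩ :=
  dif_neg h

theorem glueR_of_mem (y : W₂) (h : InTriangle a₂ b₂ c₂ y) :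
    glueR a₁ b₁ c₁ a₂ b₂ c₂ y
      = glueL a₂ b₂ c₂ (if y = a₂ then a₁ else if y = b₂ then b₁ else c₁) :=
  dif_pos h

theorem glueR_injective (h1 : a₁ ≠ b₁) (h2 : b₁ ≠ c₁) (h3 : a₁ ≠ c₁) :
    Function.Injective (glueR a₁ b₁ c₁ a₂ b₂ c₂) := by
  intro x y hxy
  by_cases hx : InTriangle a₂ b₂ c₂ x <;> by_cases hy : InTriangle a₂ b₂ c₂ y
  · rw [glueR_of_mem x hx, glueR_of_mem y hy] at hxy
    have hxy := Sum.inl_injective hxy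
    unfold InTriangle at hx hy
    grind
  · rw [glueR_of_mem x hx, glueR_of_not y hy] at hxy
    exact absurd hxy Sum.inl_ne_inr
  · rw [glueR_of_not x hx, glueR_of_mem y hy] at hxy
    exact absurd hxy Sum.inr_ne_inl
  · rw [glueR_of_not x hx, glueR_of_not y hy] at hxy
    have := Sum.inr_injective hxy
    simpa using this

theorem glue_cases (a₁ b₁ c₁ : W₁) (v : GluedVert W₁ W₂ a₂ b₂ c₂) :
    (∃ x, v = glueL a₂ b₂ c₂ x) ∨
      ∃ y, ¬ InTriangle a₂ b₂ c₂ y ∧ v = glueR a₁ b₁ c₁ a₂ b₂ c₂ y := by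
  rcases v with x | y
  · exact Or.inl ⟨x, rfl⟩
  · exact Or.inr ⟨y.1, y.2, (glueR_of_not _ y.2).symm⟩

/-- Outside the triangle, the two embedded vertex sets are disjoint. -/
theorem glueL_eq_glueR {x : W₁} {y : W₂}
    (h : glueL a₂ b₂ c₂ x = glueR a₁ b₁ c₁ a₂ b₂ c₂ y) :
    InTriangle a₁ b₁ c₁ x ∧ InTriangle a₂ b₂ c₂ y := by
  by_cases hy : InTriangle a₂ b₂ c₂ y
  · rw [glueR_of_mem y hy] at h
    have h := Sum.inl_injective h
    refine ⟨?_, hy⟩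
    unfold InTriangle
    split_ifs at h <;> simp [h]
  · rw [glueR_of_not y hy] at h
    exact absurd h Sum.inl_ne_inr

variable [Fintype W₁] [Fintype W₂] {G₁ : SimpleGraph W₁} {G₂ : SimpleGraph W₂}

theorem edgeFinset_glue (ht₁ : G₁.Adj a₁ b₁ ∧ G₁.Adj b₁ c₁ ∧ G₁.Adj a₁ c₁)
    (ht₂ : G₂.Adj a₂ b₂ ∧ G₂.Adj b₂ c₂ ∧ G₂.Adj a₂ c₂) :
    (glueOnTriangles G₁ G₂ a₁ b₁ c₁ a₂ b₂ c₂).edgeFinset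
      = (outerEdges G₁ a₁ b₁ c₁).image (Sym2.map (glueL a₂ b₂ c₂))
        ∪ (outerEdges G₂ a₂ b₂ c₂).image (Sym2.map (glueR a₁ b₁ c₁ a₂ b₂ c₂)) := by
  have nab := ht₂.1.ne
  have nbc := ht₂.2.1.ne
  have nac := ht₂.2.2.ne
  have hL : ∀ i j, s(i, j) ∈ outerEdges G₁ a₁ b₁ c₁ ↔
      G₁.Adj i j ∧ ¬ (InTriangle a₁ b₁ c₁ i ∧ InTriangle a₁ b₁ c₁ j) := by
    intro i j
    simp [outerEdges]
    tauto
  have hR : ∀ i j, s(i, j) ∈ outerEdges G₂ a₂ b₂ c₂ ↔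
      G₂.Adj i j ∧ ¬ (InTriangle a₂ b₂ c₂ i ∧ InTriangle a₂ b₂ c₂ j) := by
    intro i j
    simp [outerEdges]
    tauto
  ext e
  rw [SimpleGraph.mem_edgeFinset, Finset.mem_union, Finset.mem_image, Finset.mem_image]
  constructor
  · have key : ∀ p q : GluedVert W₁ W₂ a₂ b₂ c₂,
        (match p, q with
        | Sum.inl x, Sum.inl y =>
            G₁.Adj x y ∧ ¬ (InTriangle a₁ b₁ c₁ x ∧ InTriangle a₁ b₁ c₁ y)
        | Sum.inl x, Sum.inr y =>
            (x = a₁ ∧ G₂.Adj a₂ y.1) ∨ (x = b₁ ∧ G₂.Adj b₂ y.1) ∨ (x = c₁ ∧ G₂.Adj c₂ y.1)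
        | Sum.inr _, Sum.inl _ => False
        | Sum.inr y, Sum.inr z => G₂.Adj y.1 z.1) →
        ((∃ a ∈ outerEdges G₁ a₁ b₁ c₁, Sym2.map (glueL a₂ b₂ c₂) a = s(p, q)) ∨
          ∃ a ∈ outerEdges G₂ a₂ b₂ c₂, Sym2.map (glueR a₁ b₁ c₁ a₂ b₂ c₂) a = s(p, q)) := by
      rintro (x | x) (y | y) h
      · exact Or.inl ⟨s(x, y), (hL x y).2 h, rfl⟩
      · right
        rcases h with ⟨rfl, h⟩ | ⟨rfl, h⟩ | ⟨rfl, h⟩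
        · refine ⟨s(a₂, y.1), (hR _ _).2 ⟨h, fun h' => y.2 h'.2⟩, ?_⟩
          rw [Sym2.map_mk, glueR_a, glueR_of_not _ y.2]; rfl
        · refine ⟨s(b₂, y.1), (hR _ _).2 ⟨h, fun h' => y.2 h'.2⟩, ?_⟩
          rw [Sym2.map_mk, glueR_b nab, glueR_of_not _ y.2]; rfl
        · refine ⟨s(c₂, y.1), (hR _ _).2 ⟨h, fun h' => y.2 h'.2⟩, ?_⟩
          rw [Sym2.map_mk, glueR_c nac nbc, glueR_of_not _ y.2]; rfl
      · exact h.elim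
      · refine Or.inr ⟨s(x.1, y.1), (hR _ _).2 ⟨h, fun h' => y.2 h'.2⟩, ?_⟩
        rw [Sym2.map_mk, glueR_of_not _ y.2, glueR_of_not _ x.2]
    induction e using Sym2.ind with
    | _ p q =>
      intro h
      rw [SimpleGraph.mem_edgeSet, glueOnTriangles, SimpleGraph.fromRel_adj] at h
      rcases h.2 with h | h
      · exact key p q h
      · rw [Sym2.eq_swap]
        exact key q p h
  · rintro (⟨e, he, rfl⟩ | ⟨e, he, rfl⟩)
    · induction e using Sym2.ind with
      | _ i j =>
        rw [hL] at he
        rw [Sym2.map_mk, SimpleGraph.mem_edgeSet, glueOnTriangles, SimpleGraph.fromRel_adj]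
        exact ⟨fun h => he.1.ne (glueL_injective h), Or.inl he⟩
    · induction e using Sym2.ind with
      | _ i j =>
        rw [hR] at he
        obtain ⟨hij, hn⟩ := he
        rw [Sym2.map_mk, SimpleGraph.mem_edgeSet, glueOnTriangles, SimpleGraph.fromRel_adj]
        refine ⟨fun h => hij.ne (glueR_injective ht₁.1.ne ht₁.2.1.ne ht₁.2.2.ne h), ?_⟩
        by_cases hi : InTriangle a₂ b₂ c₂ i
        · have hj : ¬ InTriangle a₂ b₂ c₂ j := fun hj => hn ⟨hi, hj⟩
          left
          rw [glueR_of_not j hj]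
          rcases hi with rfl | rfl | rfl
          · rw [glueR_a]; exact Or.inl ⟨rfl, hij⟩
          · rw [glueR_b nab]; exact Or.inr (Or.inl ⟨rfl, hij⟩)
          · rw [glueR_c nac nbc]; exact Or.inr (Or.inr ⟨rfl, hij⟩)
        · rw [glueR_of_not i hi]
          by_cases hj : InTriangle a₂ b₂ c₂ j
          · right
            rcases hj with rfl | rfl | rfl
            · rw [glueR_a]; exact Or.inl ⟨rfl, hij.symm⟩
            · rw [glueR_b nab]; exact Or.inr (Or.inl ⟨rfl, hij.symm⟩)
            · rw [glueR_c nac nbc]; exact Or.inr (Or.inr ⟨rfl, hij.symm⟩)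
          · left
            rw [glueR_of_not j hj]; exact hij

theorem prod_edges_glue {M : Type*} [CommMonoid M]
    (ht₁ : G₁.Adj a₁ b₁ ∧ G₁.Adj b₁ c₁ ∧ G₁.Adj a₁ c₁)
    (ht₂ : G₂.Adj a₂ b₂ ∧ G₂.Adj b₂ c₂ ∧ G₂.Adj a₂ c₂)
    (g : Sym2 (GluedVert W₁ W₂ a₂ b₂ c₂) → M) :
    ∏ e ∈ (glueOnTriangles G₁ G₂ a₁ b₁ c₁ a₂ b₂ c₂).edgeFinset, g e
      = (∏ e ∈ outerEdges G₁ a₁ b₁ c₁, g (e.map (glueL a₂ b₂ c₂)))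
        * ∏ e ∈ outerEdges G₂ a₂ b₂ c₂, g (e.map (glueR a₁ b₁ c₁ a₂ b₂ c₂)) := by
  rw [edgeFinset_glue ht₁ ht₂, Finset.prod_union, Finset.prod_image, Finset.prod_image]
  · exact (Sym2.map.injective (glueR_injective ht₁.1.ne ht₁.2.1.ne ht₁.2.2.ne)).injOn
  · exact (Sym2.map.injective glueL_injective).injOn
  · -- a common edge would have both endpoints in the triangle
    rw [Finset.disjoint_left]
    intro e h1 h2
    obtain ⟨e₁, he₁, rfl⟩ := Finset.mem_image.1 h1
    obtain ⟨e₂, he₂, h⟩ := Finset.mem_image.1 h2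
    refine (Finset.mem_filter.1 he₁).2 fun v hv => ?_
    have : glueL a₂ b₂ c₂ v ∈ Sym2.map (glueR a₁ b₁ c₁ a₂ b₂ c₂) e₂ := by
      rw [h]; exact Sym2.mem_map.2 ⟨v, hv, rfl⟩
    obtain ⟨y, _, hy⟩ := Sym2.mem_map.1 this
    exact (glueL_eq_glueR hy.symm).1

/-- Listing the vertices of both graphs lists those of the gluing, with the triangle twice. -/
theorem prod_vert_glue {M : Type*} [CommMonoid M]
    (nab : a₂ ≠ b₂) (nbc : b₂ ≠ c₂) (nac : a₂ ≠ c₂)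
    (f : GluedVert W₁ W₂ a₂ b₂ c₂ → M) :
    (∏ v, f v) * (f (glueL a₂ b₂ c₂ a₁) * f (glueL a₂ b₂ c₂ b₁) * f (glueL a₂ b₂ c₂ c₁))
      = (∏ x, f (glueL a₂ b₂ c₂ x)) * ∏ y, f (glueR a₁ b₁ c₁ a₂ b₂ c₂ y) := by
  have h1 : ∏ v, f v = (∏ x : W₁, f (glueL a₂ b₂ c₂ x))
      * ∏ y : {z : W₂ // ¬ InTriangle a₂ b₂ c₂ z}, f (Sum.inr y) :=
    Fintype.prod_sum_type (α₁ := W₁) (α₂ := {z : W₂ // ¬ InTriangle a₂ b₂ c₂ z}) f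
  rw [h1, mul_assoc]
  congr 1
  rw [← Finset.prod_filter_not_mul_prod_filter Finset.univ (fun y => InTriangle a₂ b₂ c₂ y)]
  congr 1
  · rw [← Finset.prod_subtype_eq_prod_filter]
    rw [Finset.subtype_univ]
    refine Finset.prod_congr rfl fun y _ => ?_
    rw [glueR_of_not _ y.2]
  · have : Finset.univ.filter (fun y => InTriangle a₂ b₂ c₂ y) = {a₂, b₂, c₂} := by
      ext y
      rw [Finset.mem_filter]
      simp [InTriangle]
    rw [this, Finset.prod_insert (by simp [nab, nac]), Finset.prod_pair nbc, glueR_a,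
      glueR_b nab, glueR_c nac nbc, mul_assoc]

theorem card_glue (nab : a₂ ≠ b₂) (nbc : b₂ ≠ c₂) (nac : a₂ ≠ c₂) :
    Fintype.card (GluedVert W₁ W₂ a₂ b₂ c₂) + 3 = Fintype.card W₁ + Fintype.card W₂ := by
  have h1 : Fintype.card (GluedVert W₁ W₂ a₂ b₂ c₂)
      = Fintype.card W₁ + Fintype.card {z : W₂ // ¬ InTriangle a₂ b₂ c₂ z} :=
    Fintype.card_sum
  have h2 := Fintype.card_subtype_compl (fun y => InTriangle a₂ b₂ c₂ y)
  have h3 : Fintype.card {y // InTriangle a₂ b₂ c₂ y} = 3 := by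
    rw [Fintype.card_subtype]
    have : Finset.univ.filter (fun y => InTriangle a₂ b₂ c₂ y) = {a₂, b₂, c₂} := by
      ext y
      rw [Finset.mem_filter]
      simp [InTriangle]
    rw [this, Finset.card_eq_three]
    exact ⟨a₂, b₂, c₂, nab, nac, nbc, rfl⟩
  have h4 := Fintype.card_subtype_le (fun y => InTriangle a₂ b₂ c₂ y)
  omega

theorem edgeMul_map {V V' : Type*} (n : V' → ℝ≥0) (f : V → V') (e : Sym2 V) :
    edgeMul n (e.map f) = edgeMul (n ∘ f) e := by
  induction e using Sym2.ind with
  | _ i j => rfl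

theorem kern_map {V V' : Type*} {f : V → V'} (hf : Function.Injective f) (u : V) (x : V' → R4)
    (e : Sym2 V) : kern (f u) x (e.map f) = kern u (x ∘ f) e := by
  induction e using Sym2.ind with
  | _ i j => simp [kern, hf.eq_iff]

/-- Each triangle vertex occurs four times in either graph and twice among the edges of either
triangle, hence `4 + 4 - 2 - 2` times in the gluing. -/
theorem fourReg_glue (h₁ : FourReg G₁) (h₂ : FourReg G₂)
    (ht₁ : G₁.Adj a₁ b₁ ∧ G₁.Adj b₁ c₁ ∧ G₁.Adj a₁ c₁)
    (ht₂ : G₂.Adj a₂ b₂ ∧ G₂.Adj b₂ c₂ ∧ G₂.Adj a₂ c₂) :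
    FourReg (glueOnTriangles G₁ G₂ a₁ b₁ c₁ a₂ b₂ c₂) := by
  intro n hn
  have nab := ht₂.1.ne
  have nbc := ht₂.2.1.ne
  have nac := ht₂.2.2.ne
  have k1 := h₁ (n ∘ glueL a₂ b₂ c₂) fun v => hn _
  have k2 := h₂ (n ∘ glueR a₁ b₁ c₁ a₂ b₂ c₂) fun v => hn _
  have k3 := prod_vert_glue (a₁ := a₁) (b₁ := b₁) (c₁ := c₁) nab nbc nac fun v => n v ^ 4
  rw [prod_outerEdges ht₁] at k1
  rw [prod_outerEdges ht₂] at k2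
  rw [prod_edges_glue ht₁ ht₂]
  simp only [edgeMul_map]
  simp only [Function.comp_apply] at k1 k2
  rw [← k1, ← k2] at k3
  simp only [edgeMul, Sym2.lift_mk, Function.comp_apply, glueR_a, glueR_b nab,
    glueR_c nac nbc] at k3 ⊢
  have ha := hn (glueL a₂ b₂ c₂ a₁)
  have hb := hn (glueL a₂ b₂ c₂ b₁)
  have hc := hn (glueL a₂ b₂ c₂ c₁)
  generalize n (glueL a₂ b₂ c₂ a₁) = A at *
  generalize n (glueL a₂ b₂ c₂ b₁) = B at *
  generalize n (glueL a₂ b₂ c₂ c₁) = C at *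
  refine mul_right_cancel₀ (b := A ^ 4 * B ^ 4 * C ^ 4) (by positivity) ?_
  rw [k3]
  ring

/-- If `b`, `c` are at distance one, then in each graph the deleted triangle edges contribute `1`:
`ab` and `ac` because they meet `a`, and `bc` because of its length. So the integrand factors. -/
theorem kernProd_glue (ht₁ : G₁.Adj a₁ b₁ ∧ G₁.Adj b₁ c₁ ∧ G₁.Adj a₁ c₁)
    (ht₂ : G₂.Adj a₂ b₂ ∧ G₂.Adj b₂ c₂ ∧ G₂.Adj a₂ c₂)
    (x : GluedVert W₁ W₂ a₂ b₂ c₂ → R4)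
    (hx : ‖x (glueL a₂ b₂ c₂ b₁) - x (glueL a₂ b₂ c₂ c₁)‖ = 1) :
    kernProd (glueOnTriangles G₁ G₂ a₁ b₁ c₁ a₂ b₂ c₂) (glueL a₂ b₂ c₂ a₁) x
      = kernProd G₁ a₁ (x ∘ glueL a₂ b₂ c₂)
        * kernProd G₂ a₂ (x ∘ glueR a₁ b₁ c₁ a₂ b₂ c₂) := by
  have nab := ht₂.1.ne
  have nbc := ht₂.2.1.ne
  have nac := ht₂.2.2.ne
  have hx' : ‖x (glueL a₂ b₂ c₂ b₁) - x (glueL a₂ b₂ c₂ c₁)‖₊ = 1 := NNReal.eq hx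
  unfold kernProd
  rw [prod_outerEdges ht₁, prod_outerEdges ht₂, prod_edges_glue ht₁ ht₂]
  simp only [kern_map glueL_injective]
  have hinj : Function.Injective (glueR a₁ b₁ c₁ a₂ b₂ c₂) :=
    glueR_injective ht₁.1.ne ht₁.2.1.ne ht₁.2.2.ne
  have : ∀ e, kern (glueL a₂ b₂ c₂ a₁) x (e.map (glueR a₁ b₁ c₁ a₂ b₂ c₂))
      = kern a₂ (x ∘ glueR a₁ b₁ c₁ a₂ b₂ c₂) e := by
    intro e
    rw [← glueR_a (a₁ := a₁) (b₁ := b₁) (c₁ := c₁), kern_map hinj]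
  simp only [this]
  simp [kern, glueR_b nab, glueR_c nac nbc, hx', ht₁.1.ne, ht₁.2.2.ne, nab, nac]

/-- Integrating a function of the positions of the vertices in the range of `i` over the positions
of the image of `s` amounts to integrating over the positions of `s`. -/
theorem lmarginal_comp_image {V V' : Type*} {i : V' → V} (hi : Function.Injective i)
    (s : Finset V') {f : (V' → R4) → ℝ≥0∞} (hf : Measurable f) (x : V → R4) :
    (∫⋯∫⁻_(s.image i), fun x => f (x ∘ i)) x = (∫⋯∫⁻_s, f) (x ∘ i) :=
  lmarginal_image (μ := fun _ : V => (volume : Measure R4)) hi s hf x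

/-- With the triangle as marked vertices, the two groups of remaining vertices decouple. -/
theorem posLInt_glue (ht₁ : G₁.Adj a₁ b₁ ∧ G₁.Adj b₁ c₁ ∧ G₁.Adj a₁ c₁)
    (ht₂ : G₂.Adj a₂ b₂ ∧ G₂.Adj b₂ c₂ ∧ G₂.Adj a₂ c₂) {e : R4} (he : ‖e‖ = 1) :
    posLInt (glueOnTriangles G₁ G₂ a₁ b₁ c₁ a₂ b₂ c₂)
        (glueL a₂ b₂ c₂ a₁) (glueL a₂ b₂ c₂ b₁) (glueL a₂ b₂ c₂ c₁) e
      = posLInt G₁ a₁ b₁ c₁ e * posLInt G₂ a₂ b₂ c₂ e := by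
  have nab := ht₂.1.ne
  have nbc := ht₂.2.1.ne
  have nac := ht₂.2.2.ne
  have hinjL : Function.Injective (glueL (W₁ := W₁) a₂ b₂ c₂) := glueL_injective
  have hinjR : Function.Injective (glueR a₁ b₁ c₁ a₂ b₂ c₂) :=
    glueR_injective ht₁.1.ne ht₁.2.1.ne ht₁.2.2.ne
  have hRa : glueR a₁ b₁ c₁ a₂ b₂ c₂ a₂ = _ := glueR_a
  have hRb : glueR a₁ b₁ c₁ a₂ b₂ c₂ b₂ = _ := glueR_b nab
  have hRc : glueR a₁ b₁ c₁ a₂ b₂ c₂ c₂ = _ := glueR_c nac nbc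
  unfold posLInt
  set b : GluedVert W₁ W₂ a₂ b₂ c₂ → R4 :=
    fun v => if v = glueL a₂ b₂ c₂ c₁ then e else 0 with hb
  set S₁ : Finset (GluedVert W₁ W₂ a₂ b₂ c₂) :=
    ({a₁, b₁, c₁}ᶜ : Finset W₁).image (glueL a₂ b₂ c₂) with hS₁
  set S₂ : Finset (GluedVert W₁ W₂ a₂ b₂ c₂) :=
    ({a₂, b₂, c₂}ᶜ : Finset W₂).image (glueR a₁ b₁ c₁ a₂ b₂ c₂) with hS₂
  have hS₂L : ∀ x : W₁, glueL a₂ b₂ c₂ x ∉ S₂ := by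
    intro x hx
    obtain ⟨y, hy, hyx⟩ := Finset.mem_image.1 hx
    have := (glueL_eq_glueR hyx.symm).2
    simp [InTriangle] at this hy
    tauto
  have hdisj : Disjoint S₁ S₂ := by
    rw [Finset.disjoint_left]
    intro v h1 h2
    obtain ⟨x, _, rfl⟩ := Finset.mem_image.1 h1
    exact hS₂L x h2
  have hS : ({glueL a₂ b₂ c₂ a₁, glueL a₂ b₂ c₂ b₁, glueL a₂ b₂ c₂ c₁}ᶜ :
      Finset (GluedVert W₁ W₂ a₂ b₂ c₂)) = S₁ ∪ S₂ := by
    ext v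
    obtain ⟨x, rfl⟩ | ⟨y, hy, rfl⟩ := glue_cases a₁ b₁ c₁ v
    · rw [Finset.mem_union, or_iff_left (hS₂L x), hS₁, Finset.mem_image]
      simp [hinjL.eq_iff]
    · have h1 : glueR a₁ b₁ c₁ a₂ b₂ c₂ y ∈ S₂ :=
        Finset.mem_image_of_mem _ (by simpa [InTriangle] using hy)
      refine iff_of_true ?_ (Finset.mem_union_right _ h1)
      rw [Finset.mem_compl]
      intro h
      simp only [Finset.mem_insert, Finset.mem_singleton] at h
      rcases h with h | h | h <;> exact hS₂L _ (h ▸ h1)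
  have hm1 := measurable_kernProd G₁ a₁
  have hm2 := measurable_kernProd G₂ a₂
  have hcL : Measurable fun x : GluedVert W₁ W₂ a₂ b₂ c₂ → R4 => x ∘ glueL a₂ b₂ c₂ :=
    measurable_pi_lambda _ fun v => measurable_pi_apply _
  have hcR : Measurable fun x : GluedVert W₁ W₂ a₂ b₂ c₂ → R4 =>
      x ∘ glueR a₁ b₁ c₁ a₂ b₂ c₂ :=
    measurable_pi_lambda _ fun v => measurable_pi_apply _
  have hnotS : ∀ v : W₁, v = a₁ ∨ v = b₁ ∨ v = c₁ → glueL a₂ b₂ c₂ v ∉ S₁ ∪ S₂ := by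
    intro v hv
    rw [← hS]
    rcases hv with rfl | rfl | rfl <;> simp
  set C : ℝ≥0∞ := (∫⋯∫⁻_({a₂, b₂, c₂}ᶜ : Finset W₂), fun x => (kernProd G₂ a₂ x : ℝ≥0∞))
    (fun v => if v = c₂ then e else 0) with hC
  rw [hS]
  -- split the integrand, then integrate over the two groups of vertices in turn
  have step1 : (∫⋯∫⁻_(S₁ ∪ S₂), fun x => (kernProd (glueOnTriangles G₁ G₂ a₁ b₁ c₁ a₂ b₂ c₂)
        (glueL a₂ b₂ c₂ a₁) x : ℝ≥0∞)) b
      = (∫⋯∫⁻_(S₁ ∪ S₂), fun x => (kernProd G₁ a₁ (x ∘ glueL a₂ b₂ c₂) : ℝ≥0∞)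
        * (kernProd G₂ a₂ (x ∘ glueR a₁ b₁ c₁ a₂ b₂ c₂) : ℝ≥0∞)) b := by
    refine lmarginal_congr_fun fun y hy => ?_
    rw [kernProd_glue ht₁ ht₂, ENNReal.coe_mul]
    rw [hy _ (hnotS b₁ (by simp)), hy _ (hnotS c₁ (by simp))]
    simp [hb, hinjL.eq_iff, ht₁.2.1.ne, he]
  have hm : Measurable fun x : GluedVert W₁ W₂ a₂ b₂ c₂ → R4 =>
      (kernProd G₁ a₁ (x ∘ glueL a₂ b₂ c₂) : ℝ≥0∞)
        * (kernProd G₂ a₂ (x ∘ glueR a₁ b₁ c₁ a₂ b₂ c₂) : ℝ≥0∞) :=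
    (hm1.comp hcL).mul (hm2.comp hcR)
  rw [step1, lmarginal_union _ _ hm hdisj]
  have step2 : ∀ x : GluedVert W₁ W₂ a₂ b₂ c₂ → R4, (∀ i ∉ S₁, x i = b i) →
      (∫⋯∫⁻_S₂, fun x => (kernProd G₁ a₁ (x ∘ glueL a₂ b₂ c₂) : ℝ≥0∞)
        * (kernProd G₂ a₂ (x ∘ glueR a₁ b₁ c₁ a₂ b₂ c₂) : ℝ≥0∞)) x
      = (kernProd G₁ a₁ (x ∘ glueL a₂ b₂ c₂) : ℝ≥0∞) * C := by
    intro x hx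
    have e1 : (∫⋯∫⁻_S₂, fun x => (kernProd G₂ a₂ (x ∘ glueR a₁ b₁ c₁ a₂ b₂ c₂) : ℝ≥0∞)) x = C := by
      have h := lmarginal_comp_image hinjR ({a₂, b₂, c₂}ᶜ) hm2 x
      refine h.trans ?_
      refine lmarginal_congr _ _ fun v hv => ?_
      change x (glueR a₁ b₁ c₁ a₂ b₂ c₂ v) = _
      have hv' : v = a₂ ∨ v = b₂ ∨ v = c₂ := by
        simp at hv
        tauto
      have hn : ∀ v : W₁, v = a₁ ∨ v = b₁ ∨ v = c₁ → glueL a₂ b₂ c₂ v ∉ S₁ :=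
        fun v hv h => hnotS v hv (Finset.mem_union_left _ h)
      rcases hv' with rfl | rfl | rfl
      · rw [hRa, hx _ (hn _ (by simp))]
        simp [hb, hinjL.eq_iff, ht₁.2.2.ne, nac]
      · rw [hRb, hx _ (hn _ (by simp))]
        simp [hb, hinjL.eq_iff, ht₁.2.1.ne, nbc]
      · rw [hRc, hx _ (hn _ (by simp))]
        simp [hb]
    rw [← e1]
    unfold lmarginal
    rw [← lintegral_const_mul' _ _ ENNReal.coe_ne_top]
    refine lintegral_congr fun t => ?_
    have ht : Function.updateFinset x S₂ t ∘ glueL a₂ b₂ c₂ = x ∘ glueL a₂ b₂ c₂ :=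
      funext fun v => by simp [Function.updateFinset, hS₂L v]
    beta_reduce
    rw [ht]
  rw [lmarginal_congr_fun step2]
  have e2 : (∫⋯∫⁻_S₁, fun x => (kernProd G₁ a₁ (x ∘ glueL a₂ b₂ c₂) : ℝ≥0∞)) b
      = (∫⋯∫⁻_({a₁, b₁, c₁}ᶜ : Finset W₁), fun x => (kernProd G₁ a₁ x : ℝ≥0∞))
        (fun v => if v = c₁ then e else 0) := by
    have h := lmarginal_comp_image hinjL ({a₁, b₁, c₁}ᶜ) hm1 b
    refine h.trans (congrArg _ (funext fun v => ?_))
    change b (glueL a₂ b₂ c₂ v) = _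
    simp [hb, hinjL.eq_iff]
  rw [← e2]
  unfold lmarginal
  rw [← lintegral_mul_const]
  exact (hm1.comp hcL).comp measurable_updateFinset

end Gluing

/-- **Product identity.** The period of the gluing of two completed primitive graphs along
triangles (with the triangle edges deleted) is the product of the two periods, for every
admissible choice of the three marked vertices and unit vectors. -/
theorem period_glueOnTriangles {W₁ W₂ : Type*} [Fintype W₁] [Fintype W₂]
    (G₁ : SimpleGraph W₁) (G₂ : SimpleGraph W₂)
    (h₁ : CompletedPrimitive G₁) (h₂ : CompletedPrimitive G₂)
    (a₁ b₁ c₁ : W₁) (a₂ b₂ c₂ : W₂)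
    (ht₁ : G₁.Adj a₁ b₁ ∧ G₁.Adj b₁ c₁ ∧ G₁.Adj a₁ c₁)
    (ht₂ : G₂.Adj a₂ b₂ ∧ G₂.Adj b₂ c₂ ∧ G₂.Adj a₂ c₂) :
    ∀ (u w z : GluedVert W₁ W₂ a₂ b₂ c₂) (e : R4)
      (u₁ w₁ z₁ : W₁) (e₁ : R4) (u₂ w₂ z₂ : W₂) (e₂ : R4),
      u ≠ w → u ≠ z → w ≠ z → ‖e‖ = 1 →
      u₁ ≠ w₁ → u₁ ≠ z₁ → w₁ ≠ z₁ → ‖e₁‖ = 1 →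
      u₂ ≠ w₂ → u₂ ≠ z₂ → w₂ ≠ z₂ → ‖e₂‖ = 1 →
      period (glueOnTriangles G₁ G₂ a₁ b₁ c₁ a₂ b₂ c₂) u w z e =
        period G₁ u₁ w₁ z₁ e₁ * period G₂ u₂ w₂ z₂ e₂ := by
  intro u w z e u₁ w₁ z₁ e₁ u₂ w₂ z₂ e₂ huw huz hwz he huw₁ huz₁ hwz₁ he₁ huw₂ huz₂ hwz₂ he₂
  have r₁ := fourReg_of_degree G₁ h₁.1
  have r₂ := fourReg_of_degree G₂ h₂.1
  have r := fourReg_glue r₁ r₂ ht₁ ht₂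
  have hinj : Function.Injective (glueL (W₁ := W₁) a₂ b₂ c₂) := glueL_injective
  unfold period
  rw [positionIntegral_eq _ huw huz hwz, positionIntegral_eq _ huw₁ huz₁ hwz₁,
    positionIntegral_eq _ huw₂ huz₂ hwz₂,
    posLInt_indep r huw huz hwz he (hinj.ne ht₁.1.ne) (hinj.ne ht₁.2.2.ne)
      (hinj.ne ht₁.2.1.ne) he,
    posLInt_indep r₁ huw₁ huz₁ hwz₁ he₁ ht₁.1.ne ht₁.2.2.ne ht₁.2.1.ne he,
    posLInt_indep r₂ huw₂ huz₂ hwz₂ he₂ ht₂.1.ne ht₂.2.2.ne ht₂.2.1.ne he,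
    posLInt_glue ht₁ ht₂ he, ENNReal.toReal_mul]
  have hcard := card_glue (W₁ := W₁) ht₂.1.ne ht₂.2.1.ne ht₂.2.2.ne
  have c₁' := h₁.2.2.1
  have c₂' := h₂.2.2.1
  have : 2 * (Fintype.card (GluedVert W₁ W₂ a₂ b₂ c₂) - 3)
      = 2 * (Fintype.card W₁ - 3) + 2 * (Fintype.card W₂ - 3) := by omega
  rw [this, pow_add, mul_inv]
  ring
end
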